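/- arXiv:2003.09748 — 2 statements merged into one kernel-verified Lean document; each statement's English description precedes it below -/
import Mathlib

section
/- Suppose that m divides q^m − 1. Then for every integer k with 0 ≤ k ≤ m − 1, there exists a k-normal element of E over F. -/
/-! Let `F[X]` act on `E` with `X` acting as the Frobenius `φ`. By the normal basis theorem some
`β` has annihilator `(X ^ m - 1)`, so for a factorisation `X ^ m - 1 = h * g` the element `g(φ) β`
has annihilator `(h)`, and its conjugates span a space isomorphic to `F[X] / (h)`, of dimension
`deg h`. Hence it suffices that `X ^ m - 1` has a divisor of every degree up to `m`.

If `m ∣ q ^ m - 1`, then `X ^ m - 1` divides `X ^ (q ^ m) - X`, so each of its irreducible factors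
has degree `d ∣ m`, and `1 + X + ⋯ + X ^ (d - 1)` is then a divisor of degree `d - 1`. Split off an
irreducible factor of largest degree `d`. Being of smaller degree, these auxiliary divisors are
coprime to it and divide the cofactor, which therefore has degree at least `d - 1`. By induction the
cofactor has divisors of every degree, and these, with or without the factor that was split off,
leave no gap. -/

open Polynomial

section CyclicSubspace

variable {R V : Type*} [CommRing R] [AddCommGroup V] [Module R V]

/-- The linear map `p ↦ p(φ) x`, whose kernel is the annihilator of `x` and whose range is the
cyclic subspace generated by `x` under `φ`. -/
noncomputable def aevalAt (φ : Module.End R V) (x : V) : R[X] →ₗ[R] V :=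
  LinearMap.applyₗ x ∘ₗ (aeval φ).toLinearMap

/-- `IsOrderPolynomial φ x f` says that `f` is an order of the vector `x` under the endomorphism
`φ`: it generates the ideal of all `p` with `p(φ) x = 0`. When `φ` is the `q`-Frobenius of an
extension of finite fields this is the `q`-order of `x`, here determined only up to units since
`f` is not required to be monic. -/
def IsOrderPolynomial (φ : Module.End R V) (x : V) (f : R[X]) : Prop :=
  ∀ p : R[X], aevalAt φ x p = 0 ↔ f ∣ p

variable {φ : Module.End R V} {x : V} {f : R[X]}

theorem aevalAt_mul (p g : R[X]) : aevalAt φ x (p * g) = aevalAt φ (aevalAt φ x g) p := by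
  simp [aevalAt]

theorem aevalAt_modByMonic (hf : aevalAt φ x f = 0) (p : R[X]) :
    aevalAt φ x (p %ₘ f) = aevalAt φ x p := by
  calc aevalAt φ x (p %ₘ f)
    _ = aevalAt φ x (p %ₘ f + p /ₘ f * f) := by rw [map_add, aevalAt_mul, hf]; simp [aevalAt]
    _ = aevalAt φ x p := by rw [mul_comm, modByMonic_add_div]

theorem aevalAt_eq_sum_fin {n : ℕ} {p : R[X]} (hp : p.degree < n) :
    aevalAt φ x p = ∑ i : Fin n, p.coeff i • (φ ^ (i : ℕ)) x := by
  rw [sum_fin (fun i a ↦ a • (φ ^ i) x) (by simp) hp]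
  simp [aevalAt, aeval_eq_sum_range, sum_over_range]

theorem map_aevalAt_degreeLT (n : ℕ) :
    (degreeLT R n).map (aevalAt φ x) =
      Submodule.span R (Set.range fun i : Fin n ↦ (φ ^ (i : ℕ)) x) := by
  classical
  rw [degreeLT_eq_span_X_pow, Submodule.map_span]
  congr 1
  ext y
  simp [aevalAt, Fin.exists_iff]

namespace IsOrderPolynomial

theorem of_linearIndependent [Nontrivial R] {n : ℕ} (hf : f.Monic) (hn : f.natDegree = n)
    (hfx : aevalAt φ x f = 0) (hli : LinearIndependent R fun i : Fin n ↦ (φ ^ (i : ℕ)) x) :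
    IsOrderPolynomial φ x f := by
  subst hn
  intro p
  have hdeg : (p %ₘ f).degree < f.natDegree :=
    (degree_modByMonic_lt p hf).trans_le degree_le_natDegree
  rw [← aevalAt_modByMonic hfx, ← modByMonic_eq_zero_iff_dvd hf]
  refine ⟨fun hp ↦ ?_, fun hp ↦ by rw [hp, map_zero]⟩
  rw [aevalAt_eq_sum_fin hdeg] at hp
  have hcoeff := Fintype.linearIndependent_iff.1 hli _ hp
  ext i
  rcases lt_or_ge i f.natDegree with hi | hi
  · exact hcoeff ⟨i, hi⟩
  · exact coeff_eq_zero_of_degree_lt (hdeg.trans_le (by exact_mod_cast hi))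

theorem aevalAt_apply [IsDomain R] {g h : R[X]} (hx : IsOrderPolynomial φ x (h * g)) (hg : g ≠ 0) :
    IsOrderPolynomial φ (aevalAt φ x g) h := fun p ↦ by
  rw [← aevalAt_mul, hx, mul_dvd_mul_iff_right hg]

theorem ker_aevalAt (hx : IsOrderPolynomial φ x f) :
    LinearMap.ker (aevalAt φ x) = (Ideal.span {f}).restrictScalars R := by
  ext p
  rw [LinearMap.mem_ker, hx, Submodule.restrictScalars_mem, Ideal.mem_span_singleton]

theorem span_iterate_eq_range [Nontrivial R] (hx : IsOrderPolynomial φ x f) (hf : f.Monic) {n : ℕ}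
    (hn : f.natDegree ≤ n) :
    Submodule.span R (Set.range fun i : Fin n ↦ (φ ^ (i : ℕ)) x) =
      LinearMap.range (aevalAt φ x) := by
  rw [← map_aevalAt_degreeLT]
  refine le_antisymm LinearMap.map_le_range ?_
  rintro _ ⟨p, rfl⟩
  refine ⟨p %ₘ f, mem_degreeLT.2 ?_, aevalAt_modByMonic ((hx f).2 dvd_rfl) p⟩
  exact (degree_modByMonic_lt p hf).trans_le (degree_le_natDegree.trans (by exact_mod_cast hn))

theorem finrank_span_iterate [Nontrivial R] (hx : IsOrderPolynomial φ x f) (hf : f.Monic) {n : ℕ}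
    (hn : f.natDegree ≤ n) :
    Set.finrank R (Set.range fun i : Fin n ↦ (φ ^ (i : ℕ)) x) = f.natDegree := by
  rw [Set.finrank, hx.span_iterate_eq_range hf hn,
    ← (aevalAt φ x).quotKerEquivRange.finrank_eq, hx.ker_aevalAt,
    ← finrank_quotient_span_eq_natDegree' hf]
  rfl

end IsOrderPolynomial

end CyclicSubspace

section XPowSubOne

variable {R : Type*} [CommRing R]

theorem natDegree_X_pow_sub_one [Nontrivial R] (n : ℕ) : (X ^ n - 1 : R[X]).natDegree = n :=
  natDegree_X_pow_sub_C (r := 1)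

theorem natDegree_geom_sum_X_add_one [Nontrivial R] {d : ℕ} (hd : d ≠ 0) :
    (∑ i ∈ Finset.range d, (X : R[X]) ^ i).natDegree + 1 = d := by
  have h := congrArg natDegree (geom_sum_mul (X : R[X]) d)
  rwa [natDegree_X_pow_sub_one, ← C_1, (monic_geom_sum_X hd).natDegree_mul (monic_X_sub_C 1),
    natDegree_X_sub_C] at h

theorem geom_sum_X_dvd_X_pow_sub_one {d n : ℕ} (hdn : d ∣ n) :
    ∑ i ∈ Finset.range d, (X : R[X]) ^ i ∣ X ^ n - 1 :=
  (Dvd.intro _ (geom_sum_mul X d)).trans (dvd_pow_sub_one_of_dvd hdn)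

end XPowSubOne

section DivisorDegrees

variable {F : Type*} [Field F]

theorem exists_irreducible_dvd_maximal_natDegree {f : F[X]} (hf : f.natDegree ≠ 0) :
    ∃ g, Irreducible g ∧ g ∣ f ∧ ∀ e, Irreducible e → e ∣ f → e.natDegree ≤ g.natDegree := by
  have hf0 : f ≠ 0 := by rintro rfl; exact hf natDegree_zero
  obtain ⟨e, he, hef⟩ := exists_irreducible_of_natDegree_ne_zero hf
  obtain ⟨_, ⟨g, ⟨hg, hgf⟩, rfl⟩, hmax⟩ := BddAbove.exists_isGreatest_of_nonempty
    (S := natDegree '' {g | Irreducible g ∧ g ∣ f})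
    ⟨f.natDegree, by rintro _ ⟨g, ⟨-, hgf⟩, rfl⟩; exact natDegree_le_of_dvd hgf hf0⟩
    ⟨_, e, ⟨he, hef⟩, rfl⟩
  exact ⟨g, hg, hgf, fun e he hef ↦ hmax ⟨e, ⟨he, hef⟩, rfl⟩⟩

theorem exists_dvd_natDegree_eq {f : F[X]} (hf : f ≠ 0)
    (hfill : ∀ e, Irreducible e → e ∣ f → ∃ u, u ∣ f ∧ e.natDegree = u.natDegree + 1)
    {k : ℕ} (hk : k ≤ f.natDegree) :
    ∃ h, h ∣ f ∧ h.natDegree = k := by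
  induction hn : f.natDegree using Nat.strong_induction_on generalizing f k with
  | _ n ih =>
  subst hn
  rcases eq_or_ne f.natDegree 0 with hf0 | hf0
  · exact ⟨1, one_dvd f, by rw [natDegree_one]; omega⟩
  obtain ⟨g, hg, ⟨f', rfl⟩, hmax⟩ := exists_irreducible_dvd_maximal_natDegree hf0
  have hf' : f' ≠ 0 := right_ne_zero_of_mul hf
  have hgpos := hg.natDegree_pos
  have hdeg : (g * f').natDegree = g.natDegree + f'.natDegree := natDegree_mul hg.ne_zero hf'
  have hfill' : ∀ e, Irreducible e → e ∣ g * f' → ∃ u, u ∣ f' ∧ e.natDegree = u.natDegree + 1 := by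
    intro e he hef
    obtain ⟨u, huf, hu⟩ := hfill e he hef
    have hgu : IsCoprime g u := hg.coprime_iff_not_dvd.2 fun hgu ↦ by
      have hgu_le := natDegree_le_of_dvd hgu (ne_zero_of_dvd_ne_zero hf huf)
      have heg_le := hmax e he hef
      omega
    exact ⟨u, hgu.symm.dvd_of_dvd_mul_left huf, hu⟩
  have hrec {j : ℕ} (hj : j ≤ f'.natDegree) : ∃ h, h ∣ f' ∧ h.natDegree = j :=
    ih _ (by omega) hf' (fun e he hef ↦ hfill' e he (hef.mul_left g)) hj rfl
  by_cases hkf : k ≤ f'.natDegree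
  · obtain ⟨h, hhf, hh⟩ := hrec hkf
    exact ⟨h, hhf.mul_left g, hh⟩
  · obtain ⟨u, huf, hu⟩ := hfill' g hg (dvd_mul_right g f')
    have hule : u.natDegree ≤ f'.natDegree := natDegree_le_of_dvd huf hf'
    obtain ⟨h, hhf, hh⟩ := hrec (j := k - g.natDegree) (by omega)
    refine ⟨g * h, mul_dvd_mul_left g hhf, ?_⟩
    rw [natDegree_mul hg.ne_zero (ne_zero_of_dvd_ne_zero hf' hhf)]
    omega

theorem exists_monic_dvd_X_pow_sub_one_natDegree_eq {n : ℕ} (hn : 0 < n)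
    (hirr : ∀ g : F[X], Irreducible g → g ∣ X ^ n - 1 → g.natDegree ∣ n) {k : ℕ} (hk : k ≤ n) :
    ∃ h : F[X], h.Monic ∧ h ∣ X ^ n - 1 ∧ h.natDegree = k := by
  classical
  have hne : (X ^ n - 1 : F[X]) ≠ 0 := X_pow_sub_C_ne_zero hn 1
  obtain ⟨h, hdvd, rfl⟩ : ∃ h : F[X], h ∣ X ^ n - 1 ∧ h.natDegree = k :=
    exists_dvd_natDegree_eq hne
      (fun e he hen ↦ ⟨_, geom_sum_X_dvd_X_pow_sub_one (hirr e he hen),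
        (natDegree_geom_sum_X_add_one he.natDegree_pos.ne').symm⟩)
      (hk.trans_eq (natDegree_X_pow_sub_one n).symm)
  exact ⟨normalize h, monic_normalize (ne_zero_of_dvd_ne_zero hne hdvd), normalize_dvd_iff.2 hdvd,
    natDegree_eq_of_degree_eq degree_normalize⟩

theorem natDegree_dvd_of_dvd_X_pow_sub_one [Finite F] {m n : ℕ} (hmn : m ∣ Nat.card F ^ n - 1)
    {g : F[X]} (hg : Irreducible g) (hgm : g ∣ X ^ m - 1) : g.natDegree ∣ n := by
  refine hg.natDegree_dvd_of_dvd_X_pow_card_pow_sub_X (hgm.trans ?_)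
  have hX : (X ^ (Nat.card F ^ n - 1) - 1) * X = (X ^ Nat.card F ^ n - X : F[X]) := by
    rw [sub_one_mul, pow_sub_one_mul (pow_ne_zero n Nat.card_pos.ne')]
  exact hX ▸ (dvd_pow_sub_one_of_dvd hmn).mul_right X

end DivisorDegrees

section Galois

variable {F E : Type*} [Field F] [Field E] [Algebra F E]

theorem exists_linearIndependent_pow_apply {σ : E ≃ₐ[F] E} (hσ : IsOfFinOrder σ) :
    ∃ β : E, LinearIndependent F fun i : Fin (orderOf σ) ↦ (σ ^ (i : ℕ)) β := by
  let H := Subgroup.zpowers σ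
  let K := IntermediateField.fixedField H
  have : Finite H := finite_zpowers.2 hσ
  have : FiniteDimensional K E := inferInstanceAs (FiniteDimensional (FixedPoints.subfield H E) E)
  obtain ⟨β, hβ⟩ := exists_linearIndependent_algEquiv_apply K E
  have hσK : σ ∈ K.fixingSubgroup :=
    (IntermediateField.le_iff_le _ _).1 le_rfl (Subgroup.mem_zpowers σ)
  let τ : E ≃ₐ[K] E := IntermediateField.fixingSubgroupEquiv K ⟨σ, hσK⟩
  have hτ (i : ℕ) (y : E) : (τ ^ i) y = (σ ^ i) y := by
    rw [AlgEquiv.coe_pow, AlgEquiv.coe_pow, show ⇑τ = σ from rfl]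
  have hinj : Function.Injective fun i : Fin (orderOf σ) ↦ τ ^ (i : ℕ) := fun i j hij ↦
    Fin.ext <| pow_injOn_Iio_orderOf i.2 j.2 <| AlgEquiv.ext fun y ↦ by
      simpa only [hτ] using DFunLike.congr_fun hij y
  refine ⟨β, ?_⟩
  simpa only [Function.comp_def, hτ] using (hβ.restrict_scalars' F).comp _ hinj

theorem exists_isOrderPolynomial_X_pow_sub_one {σ : E ≃ₐ[F] E} (hσ : IsOfFinOrder σ) :
    ∃ β : E, IsOrderPolynomial σ.toLinearMap β (X ^ orderOf σ - 1) := by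
  obtain ⟨β, hβ⟩ := exists_linearIndependent_pow_apply hσ
  refine ⟨β, .of_linearIndependent (monic_X_pow_sub_C 1 hσ.orderOf_pos.ne')
    (natDegree_X_pow_sub_one _) ?_ ?_⟩
  · simp [aevalAt, ← AlgEquiv.pow_toLinearMap, pow_orderOf_eq_one]
  · simpa only [← AlgEquiv.pow_toLinearMap, AlgEquiv.toLinearMap_apply] using hβ

theorem frobeniusAlgEquivOfAlgebraic_pow_apply [Fintype F] [Algebra.IsAlgebraic F E] (i : ℕ)
    (x : E) : (FiniteField.frobeniusAlgEquivOfAlgebraic F E ^ i) x = x ^ Fintype.card F ^ i := by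
  rw [AlgEquiv.coe_pow, FiniteField.coe_frobeniusAlgEquivOfAlgebraic_iterate]

end Galois

theorem exists_kNormal_of_dvd_general {F E : Type*} [Field F] [Field E] [Algebra F E]
    {σ : E ≃ₐ[F] E} {n : ℕ} (hn : 0 < n) (hσ : orderOf σ = n)
    (hirr : ∀ g : F[X], Irreducible g → g ∣ X ^ n - 1 → g.natDegree ∣ n) {d : ℕ} (hd : d ≤ n) :
    ∃ α : E, Set.finrank F (Set.range fun i : Fin n ↦ (σ ^ (i : ℕ)) α) = d := by
  subst hσ
  obtain ⟨h, hh, ⟨g, hhg⟩, rfl⟩ := exists_monic_dvd_X_pow_sub_one_natDegree_eq hn hirr hd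
  obtain ⟨β, hβ⟩ := exists_isOrderPolynomial_X_pow_sub_one (orderOf_pos_iff.1 hn)
  have hg : g ≠ 0 := right_ne_zero_of_mul (hhg ▸ X_pow_sub_C_ne_zero hn 1)
  rw [hhg] at hβ
  refine ⟨aevalAt σ.toLinearMap β g, ?_⟩
  simpa only [← AlgEquiv.pow_toLinearMap, AlgEquiv.toLinearMap_apply]
    using (hβ.aevalAt_apply hg).finrank_span_iterate hh hd

/-- Let `E/F` be a degree-`m` extension of finite fields with `card F = q`.
If `m ∣ q^m − 1`, then for every `k` with `0 ≤ k ≤ m − 1` there exists a `k`-normal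
element of `E` over `F`. -/
theorem exists_kNormal_of_dvd
    {F E : Type} [Field F] [Fintype F] [Field E] [Fintype E] [Algebra F E]
    (q m : ℕ) (hF : Fintype.card F = q) (hm : Module.finrank F E = m)
    (hdvd : m ∣ q ^ m - 1) :
    ∀ k : ℕ, k ≤ m - 1 →
      ∃ α : E, Module.finrank F
          ↥(Submodule.span F (Set.range fun i : Fin m => α ^ q ^ (i : ℕ))) = m - k := by
  subst hF hm
  intro k _
  simpa only [frobeniusAlgEquivOfAlgebraic_pow_apply] using!
    exists_kNormal_of_dvd_general Module.finrank_pos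
      (FiniteField.orderOf_frobeniusAlgEquivOfAlgebraic F E)
      (fun _ ↦ natDegree_dvd_of_dvd_X_pow_sub_one (Nat.card_eq_fintype_card (α := F) ▸ hdvd))
      (Nat.sub_le _ k)
end

section
/- Suppose that gcd(m, q − 1) = 1. Then there exists an element α ∈ E that is normal over F (i.e. 0-normal: its conjugates {α, α^q, ..., α^{q^{m−1}}} form an F-basis of E) and whose multiplicative order in the group Eˣ equals (q^m − 1)/(q − 1). -/
/-!
Put `Q = (q ^ m - 1) / (q - 1)`. Since `m` is coprime to `q - 1`, so is `Q`. If `x` is normal and is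
not an `l`-th power for any prime `l ∣ Q`, then some multiple `c • x` with `c ∈ Fˣ` has norm
`(c • x) ^ Q = 1`; it is still normal and still not an `l`-th power, so its order is exactly `Q`.

The element `x` is found by a character sum sieve. For the Frobenius action of `F[X]` on `E`, being
normal means avoiding the image of each of the `t` irreducible factors of `X ^ m - 1`. Being an
`l`-th power is detected by multiplicative characters and lying in such an image by additive ones,
and the mixed sums are Gauss sums, of modulus at most `√(q ^ m)` off the main term. Hence `x` exists
when `((2 ^ ω - 1) * (2 ^ t - 1)) ^ 2 < q ^ m`, where `ω` is the number of prime factors of `Q`.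
Since `Q` is at least the product of its prime factors, `ω` is small; counting the factors of
`X ^ m - 1` by degree bounds `t`. This leaves finitely many pairs, of which a computation excludes
all but `(q, m) = (2, 3), (2, 6), (2, 15)`. In these the largest prime `l ∣ Q` is left out of the
sieve, and the at most `(q ^ m - 1) / l` nonzero `l`-th powers are removed from what it produces.
-/

section SieveElement

open scoped MonoidAlgebra

variable {X ι : Type*} [CommGroup X]

/-- The sum of the absolute values of the coefficients of an element of a group algebra. -/
noncomputable def coeffNorm [Fintype X] (c : ℂ[X]) : ℝ := ∑ χ, ‖c.coeff χ‖

lemma coeffNorm_one [Fintype X] : coeffNorm (1 : ℂ[X]) = 1 := by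
  classical
  simp [coeffNorm, MonoidAlgebra.one_def, Finsupp.single_apply, apply_ite]

lemma coeffNorm_mul_le [Fintype X] (a b : ℂ[X]) :
    coeffNorm (a * b) ≤ coeffNorm a * coeffNorm b := by
  have coeff_mul (χ : X) : (a * b).coeff χ = ∑ η, a.coeff η * b.coeff (η⁻¹ * χ) := by
    rw [MonoidAlgebra.coeff_mul_apply_left, Finsupp.sum_fintype _ _ (by simp)]
  calc coeffNorm (a * b) ≤ ∑ χ, ∑ η, ‖a.coeff η‖ * ‖b.coeff (η⁻¹ * χ)‖ := by
        refine Finset.sum_le_sum fun χ _ => ?_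
        simpa only [coeff_mul, norm_mul] using
          norm_sum_le Finset.univ fun η => a.coeff η * b.coeff (η⁻¹ * χ)
    _ = coeffNorm a * coeffNorm b := by
        rw [Finset.sum_comm, coeffNorm, Finset.sum_mul]
        refine Finset.sum_congr rfl fun η _ => ?_
        rw [← Finset.mul_sum, coeffNorm]
        exact congrArg _ (Equiv.sum_comp (Equiv.mulLeft η⁻¹) fun χ => ‖b.coeff χ‖)

lemma lift_eq_sum [Fintype X] (φ : X →* ℂ) (c : ℂ[X]) :
    MonoidAlgebra.lift ℂ ℂ X φ c = ∑ χ, c.coeff χ * φ χ := by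
  rw [MonoidAlgebra.lift_apply, Finsupp.sum_fintype _ _ (by simp)]
  simp only [smul_eq_mul]

lemma mem_sup_of_coeff_mul_ne_zero {a b : ℂ[X]} {Y Z : Subgroup X}
    (ha : ∀ χ, a.coeff χ ≠ 0 → χ ∈ Y) (hb : ∀ χ, b.coeff χ ≠ 0 → χ ∈ Z) {χ : X}
    (hχ : (a * b).coeff χ ≠ 0) : χ ∈ Y ⊔ Z := by
  classical
  obtain ⟨y, hy, z, hz, rfl⟩ := Finset.mem_mul.mp
    (MonoidAlgebra.support_coeff_mul_subset a b (Finsupp.mem_support_iff.mpr hχ))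
  exact Subgroup.mul_mem_sup (ha y (by simpa using hy)) (hb z (by simpa using hz))

lemma coeff_mul_one_of_disjoint {a b : ℂ[X]} {Y Z : Subgroup X} (hYZ : Disjoint Y Z)
    (ha : ∀ χ, a.coeff χ ≠ 0 → χ ∈ Y) (hb : ∀ χ, b.coeff χ ≠ 0 → χ ∈ Z) :
    (a * b).coeff 1 = a.coeff 1 * b.coeff 1 := by
  rw [MonoidAlgebra.coeff_mul_apply_left, Finsupp.sum_eq_single 1 _ (by simp), inv_one, one_mul]
  intro χ hχ hne
  by_contra hmul
  have hχZ := hb _ (right_ne_zero_of_mul hmul)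
  rw [mul_one, inv_mem_iff] at hχZ
  exact hne (Subgroup.disjoint_def.mp hYZ (ha χ hχ) hχZ)

open scoped Classical in
/-- The element `1 - (|Y| - 1)⁻¹ ∑_{1 ≠ χ ∈ Y} χ` of the group algebra of a group of characters,
which vanishes at the points where all of `Y` is trivial. It is normalized to have constant
coefficient `1`. -/
noncomputable def sieveElement [Finite X] (Y : Subgroup X) : ℂ[X] :=
  .ofCoeff (Finsupp.equivFunOnFinite.symm fun χ =>
    if χ = 1 then 1 else if χ ∈ Y then -((Nat.card Y : ℂ) - 1)⁻¹ else 0)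

lemma sieveElement_coeff_one [Finite X] (Y : Subgroup X) : (sieveElement Y).coeff 1 = 1 := by
  simp [sieveElement]

lemma mem_of_sieveElement_coeff_ne_zero [Finite X] (Y : Subgroup X) (χ : X)
    (hχ : (sieveElement Y).coeff χ ≠ 0) : χ ∈ Y := by
  by_contra hY
  have : χ ≠ 1 := fun h => hY (h ▸ Y.one_mem)
  simp [sieveElement, this, hY] at hχ

open scoped Classical in
lemma sum_sieveElement_coeff [Fintype X] {M : Type*} [AddCommMonoid M] (Y : Subgroup X)
    (h : X → ℂ → M) (h_zero : ∀ χ, h χ 0 = 0) :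
    ∑ χ, h χ ((sieveElement Y).coeff χ) =
      h 1 1 + ∑ χ ∈ (Y : Set X).toFinset.erase 1, h χ (-((Nat.card Y : ℂ) - 1)⁻¹) := by
  rw [← Finset.add_sum_erase _ _ (Finset.mem_univ 1), sieveElement_coeff_one]
  refine congrArg _ (Finset.sum_subset_zero_on_sdiff
    (Finset.erase_subset_erase _ (Finset.subset_univ _)) (fun χ hχ => ?_) fun χ hχ => ?_).symm
  · simp only [Finset.mem_sdiff, Finset.mem_erase, Finset.mem_univ, Set.mem_toFinset,
      SetLike.mem_coe] at hχ
    have : χ ∉ Y := by tauto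
    simp [sieveElement, this, hχ.1.1, h_zero]
  · simp only [Finset.mem_erase, Set.mem_toFinset, SetLike.mem_coe] at hχ
    simp [sieveElement, hχ.1, hχ.2]

open scoped Classical in
lemma card_toFinset_erase_one [Fintype X] (Y : Subgroup X) :
    (((Y : Set X).toFinset.erase 1).card : ℝ) = Nat.card Y - 1 := by
  rw [Finset.cast_card_erase_of_mem (by simp), Set.toFinset_card, ← Nat.card_eq_fintype_card]
  rfl

lemma coeffNorm_sieveElement_le [Fintype X] (Y : Subgroup X) :
    coeffNorm (sieveElement Y) ≤ 2 := by
  classical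
  have hY : (0 : ℝ) ≤ Nat.card Y - 1 := card_toFinset_erase_one Y ▸ Nat.cast_nonneg _
  have norm_coeff : ‖-((Nat.card Y : ℂ) - 1)⁻¹‖ = ((Nat.card Y : ℝ) - 1)⁻¹ := by
    rw [norm_neg, norm_inv, ← Complex.norm_of_nonneg hY]
    push_cast
    rfl
  rw [coeffNorm, sum_sieveElement_coeff Y (fun _ z => ‖z‖) (fun _ => norm_zero), Finset.sum_const,
    nsmul_eq_mul, card_toFinset_erase_one, norm_coeff, norm_one]
  linarith [mul_inv_le_one (a := (Nat.card Y : ℝ) - 1)]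

open scoped Classical in
lemma lift_sieveElement [Finite X] {Y : Subgroup X} (hY : Y ≠ ⊥) (φ : X →* ℂ) :
    MonoidAlgebra.lift ℂ ℂ X φ (sieveElement Y) =
      if ∃ χ ∈ Y, φ χ ≠ 1 then (1 - (Nat.card Y : ℂ)⁻¹)⁻¹ else 0 := by
  cases nonempty_fintype X
  have one_lt : (1 : ℝ) < Nat.card Y := by
    exact_mod_cast (Subgroup.one_lt_card_iff_ne_bot Y).mpr hY
  have card_ne_zero : (Nat.card Y : ℂ) ≠ 0 := by exact_mod_cast (one_lt.trans' one_pos).ne'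
  have card_sub_ne_zero : (Nat.card Y : ℂ) - 1 ≠ 0 := by
    exact_mod_cast (sub_pos.mpr one_lt).ne'
  have trivial_iff : φ.comp Y.subtype = 1 ↔ ¬ ∃ χ ∈ Y, φ χ ≠ 1 := by
    simp [MonoidHom.ext_iff]
  have sum_eq : ∑ χ ∈ (Y : Set X).toFinset.erase 1, φ χ =
      (if ∃ χ ∈ Y, φ χ ≠ 1 then 0 else (Nat.card Y : ℂ)) - 1 := by
    rw [Finset.sum_erase_eq_sub (by simp), map_one,
      Finset.sum_subtype (p := (· ∈ Y)) (F := inferInstance) _ (by simp), ← ite_not]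
    refine congrArg (· - 1) ?_
    simpa [trivial_iff, Nat.card_eq_fintype_card] using sum_hom_units (φ.comp Y.subtype)
  rw [lift_eq_sum, sum_sieveElement_coeff Y (fun χ z => z * φ χ) (fun _ => zero_mul _),
    ← Finset.mul_sum, sum_eq]
  split_ifs
  · rw [map_one]
    field_simp
    ring
  · rw [map_one, neg_mul, inv_mul_cancel₀ card_sub_ne_zero, one_mul, add_neg_cancel]

/-- The product of the sieve elements of a finite family of subgroups. -/
noncomputable def sieveProduct [Finite X] (S : Finset ι) (Y : ι → Subgroup X) : ℂ[X] :=
  ∏ i ∈ S, sieveElement (Y i)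

lemma mem_sup_of_sieveProduct_coeff_ne_zero [Finite X] (S : Finset ι) (Y : ι → Subgroup X)
    (χ : X) (hχ : (sieveProduct S Y).coeff χ ≠ 0) : χ ∈ S.sup Y := by
  classical
  induction S using Finset.induction_on generalizing χ with
  | empty =>
    rw [sieveProduct, Finset.prod_empty, MonoidAlgebra.one_def, MonoidAlgebra.coeff_single,
      Finsupp.single_apply] at hχ
    simp_all
  | insert i S hi ih =>
    rw [sieveProduct, Finset.prod_insert hi] at hχ
    rw [Finset.sup_insert]
    exact mem_sup_of_coeff_mul_ne_zero (mem_of_sieveElement_coeff_ne_zero _) ih hχ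

lemma sieveProduct_coeff_one [Finite X] {S : Finset ι} {Y : ι → Subgroup X}
    (hY : S.SupIndep Y) : (sieveProduct S Y).coeff 1 = 1 := by
  classical
  induction S using Finset.induction_on with
  | empty => simp [sieveProduct]
  | insert i S hi ih =>
    have hdisj : Disjoint (Y i) (S.sup Y) :=
      hY (Finset.subset_insert i S) (Finset.mem_insert_self i S) hi
    rw [sieveProduct, Finset.prod_insert hi, ← sieveProduct,
      coeff_mul_one_of_disjoint hdisj (mem_of_sieveElement_coeff_ne_zero _)
        (mem_sup_of_sieveProduct_coeff_ne_zero S Y),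
      sieveElement_coeff_one, ih (hY.subset (Finset.subset_insert i S)), one_mul]

lemma coeffNorm_sieveProduct_le [Fintype X] (S : Finset ι) (Y : ι → Subgroup X) :
    coeffNorm (sieveProduct S Y) ≤ 2 ^ S.card := by
  classical
  induction S using Finset.induction_on with
  | empty => simp [sieveProduct, coeffNorm_one]
  | insert i S hi ih =>
    rw [sieveProduct, Finset.prod_insert hi, Finset.card_insert_of_notMem hi, pow_succ']
    exact (coeffNorm_mul_le _ _).trans (mul_le_mul (coeffNorm_sieveElement_le _) ih
      (Finset.sum_nonneg fun _ _ => norm_nonneg _) zero_le_two)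

open scoped Classical in
lemma lift_sieveProduct [Finite X] {S : Finset ι} {Y : ι → Subgroup X} (hY : ∀ i ∈ S, Y i ≠ ⊥)
    (φ : X →* ℂ) :
    MonoidAlgebra.lift ℂ ℂ X φ (sieveProduct S Y) =
      if ∀ i ∈ S, ∃ χ ∈ Y i, φ χ ≠ 1 then (∏ i ∈ S, (1 - (Nat.card (Y i) : ℂ)⁻¹))⁻¹ else 0 := by
  rw [sieveProduct, map_prod, Finset.prod_congr rfl fun i hi => lift_sieveElement (hY i hi) φ,
    Finset.prod_ite_zero, Finset.prod_inv_distrib]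

lemma prod_one_sub_inv_card_pos [Finite X] {S : Finset ι} {Y : ι → Subgroup X}
    (hY : ∀ i ∈ S, Y i ≠ ⊥) : 0 < ∏ i ∈ S, (1 - (Nat.card (Y i) : ℝ)⁻¹) := by
  refine Finset.prod_pos fun i hi => sub_pos.mpr (inv_lt_one_of_one_lt₀ ?_)
  exact_mod_cast (Subgroup.one_lt_card_iff_ne_bot _).mpr (hY i hi)

end SieveElement

section GaussSumSieve

open scoped MonoidAlgebra

variable {E : Type*} [Field E] [Fintype E]

/-- The evaluation of multiplicative characters at a unit. -/
noncomputable def mulCharEval (u : Eˣ) : MulChar E ℂ →* ℂ where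
  toFun χ := χ u
  map_one' := MulChar.one_apply_coe u
  map_mul' χ η := MulChar.mul_apply χ η u

/-- The evaluation of additive characters at a point. -/
noncomputable def addCharEval (x : E) : AddChar E ℂ →* ℂ where
  toFun ψ := ψ x
  map_one' := AddChar.one_apply x
  map_mul' ψ η := AddChar.mul_apply ψ η x

lemma norm_gaussSum_of_ne_one {χ : MulChar E ℂ} (hχ : χ ≠ 1) {ψ : AddChar E ℂ} (hψ : ψ ≠ 1) :
    ‖gaussSum χ ψ‖ = √(Fintype.card E) := by
  have h := congrArg norm (gaussSum_mul_gaussSum_eq_card hχ (AddChar.IsPrimitive.of_ne_one hψ))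
  rw [← star_gaussSum_eq, norm_mul, norm_star, Complex.norm_natCast] at h
  rw [← h, Real.sqrt_mul_self (norm_nonneg _)]

lemma sum_units_mul_eq_gaussSum [Fintype Eˣ] (χ : MulChar E ℂ) (ψ : AddChar E ℂ) :
    ∑ u : Eˣ, χ u * ψ u = gaussSum χ ψ := by
  classical
  rw [gaussSum, Fintype.sum_eq_add_sum_subtype_ne (fun x => χ x * ψ x) 0, MulChar.map_zero,
    zero_mul, zero_add]
  exact Fintype.sum_equiv unitsEquivNeZero _ _ fun _ => rfl

lemma sum_gaussSum_one [Fintype (AddChar E ℂ)] (b : AddChar E ℂ → ℂ) (hb : ∑ ψ, b ψ = 0) :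
    ∑ ψ, b ψ * gaussSum (1 : MulChar E ℂ) ψ = b 1 * Fintype.card E := by
  classical
  have term (ψ : AddChar E ℂ) : b ψ * gaussSum (1 : MulChar E ℂ) ψ =
      (if ψ = 1 then b ψ * Fintype.card E else 0) - b ψ := by
    split_ifs with hψ
    · rw [hψ, gaussSum_one_one, Nat.card_units, Nat.card_eq_fintype_card,
        Nat.cast_pred Fintype.card_pos, mul_sub_one]
    · rw [gaussSum_one_left hψ, mul_neg_one, zero_sub]
  simp only [term, Finset.sum_sub_distrib, hb, sub_zero, Finset.sum_ite_eq', Finset.mem_univ,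
    if_true]

lemma norm_sum_mul_gaussSum_le [Fintype (AddChar E ℂ)] {χ : MulChar E ℂ} (hχ : χ ≠ 1)
    (b : AddChar E ℂ → ℂ) :
    ‖∑ ψ, b ψ * gaussSum χ ψ‖ ≤ (∑ ψ, ‖b ψ‖ - ‖b 1‖) * √(Fintype.card E) := by
  classical
  rw [← Finset.add_sum_erase _ _ (Finset.mem_univ 1), gaussSum_one_right hχ, mul_zero, zero_add,
    ← Finset.sum_erase_eq_sub (Finset.mem_univ 1), Finset.sum_mul]
  refine norm_sum_le_of_le _ fun ψ hψ => ?_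
  rw [norm_mul, norm_gaussSum_of_ne_one hχ (Finset.ne_of_mem_erase hψ)]

lemma norm_sum_sum_mul_gaussSum_sub_card_le [Fintype (MulChar E ℂ)] [Fintype (AddChar E ℂ)]
    {c : MulChar E ℂ → ℂ} {b : AddChar E ℂ → ℂ} (hc : c 1 = 1) (hb : b 1 = 1)
    (hsum : ∑ ψ, b ψ = 0) :
    ‖∑ χ, c χ * ∑ ψ, b ψ * gaussSum χ ψ - Fintype.card E‖ ≤
      (∑ χ, ‖c χ‖ - 1) * ((∑ ψ, ‖b ψ‖ - 1) * √(Fintype.card E)) := by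
  classical
  rw [← Finset.add_sum_erase _ _ (Finset.mem_univ 1), sum_gaussSum_one b hsum, hc, hb, one_mul,
    one_mul, add_sub_cancel_left, ← norm_one (α := ℂ), ← hc,
    ← Finset.sum_erase_eq_sub (Finset.mem_univ 1), Finset.sum_mul]
  refine norm_sum_le_of_le _ fun χ hχ => ?_
  rw [norm_mul, hc, ← hb]
  exact mul_le_mul_of_nonneg_left (norm_sum_mul_gaussSum_le (Finset.ne_of_mem_erase hχ) b)
    (norm_nonneg _)

lemma sum_lift_mul_lift_eq_sum_gaussSum [Fintype Eˣ] [Fintype (MulChar E ℂ)]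
    [Fintype (AddChar E ℂ)] (c : ℂ[MulChar E ℂ]) (b : ℂ[AddChar E ℂ]) :
    ∑ u : Eˣ, MonoidAlgebra.lift ℂ ℂ _ (mulCharEval u) c *
      MonoidAlgebra.lift ℂ ℂ _ (addCharEval (u : E)) b =
    ∑ χ, c.coeff χ * ∑ ψ, b.coeff ψ * gaussSum χ ψ := by
  calc _ = ∑ u : Eˣ, ∑ χ, ∑ ψ, c.coeff χ * (b.coeff ψ * (χ (u : E) * ψ (u : E))) := by
        refine Finset.sum_congr rfl fun u _ => ?_
        rw [lift_eq_sum, lift_eq_sum, Finset.sum_mul_sum]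
        refine Finset.sum_congr rfl fun χ _ => Finset.sum_congr rfl fun ψ _ => ?_
        exact (mul_mul_mul_comm _ _ _ _).trans (mul_assoc _ _ _)
    _ = ∑ χ, ∑ ψ, ∑ u : Eˣ, c.coeff χ * (b.coeff ψ * (χ (u : E) * ψ (u : E))) := by
        rw [Finset.sum_comm]
        exact Finset.sum_congr rfl fun χ _ => Finset.sum_comm
    _ = _ := by simp only [Finset.mul_sum, ← sum_units_mul_eq_gaussSum]

variable {ι κ : Type*} {S : Finset ι} {Y : ι → Subgroup (MulChar E ℂ)} {T : Finset κ}
  {Z : κ → Subgroup (AddChar E ℂ)}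

lemma norm_sum_sieveProduct_sub_card_le [Fintype Eˣ] (hY : S.SupIndep Y)
    (hZ : T.SupIndep Z) (hZ_bot : ∀ j ∈ T, Z j ≠ ⊥) (hT : T.Nonempty) :
    ‖∑ u : Eˣ, MonoidAlgebra.lift ℂ ℂ _ (mulCharEval u) (sieveProduct S Y) *
      MonoidAlgebra.lift ℂ ℂ _ (addCharEval (u : E)) (sieveProduct T Z) - Fintype.card E‖ ≤
      (2 ^ S.card - 1) * ((2 ^ T.card - 1) * √(Fintype.card E)) := by
  classical
  cases nonempty_fintype (MulChar E ℂ)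
  cases nonempty_fintype (AddChar E ℂ)
  have coeff_sum : ∑ ψ, (sieveProduct T Z).coeff ψ = 0 := by
    obtain ⟨j, hj⟩ := hT
    have lift_zero := lift_sieveProduct hZ_bot (addCharEval (0 : E))
    rw [lift_eq_sum, if_neg fun h => by simpa [addCharEval] using h j hj] at lift_zero
    simpa [addCharEval] using lift_zero
  rw [sum_lift_mul_lift_eq_sum_gaussSum]
  refine (norm_sum_sum_mul_gaussSum_sub_card_le (sieveProduct_coeff_one hY)
    (sieveProduct_coeff_one hZ) coeff_sum).trans ?_
  have one_le : 1 ≤ coeffNorm (sieveProduct T Z) := by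
    rw [← norm_one (α := ℂ), ← sieveProduct_coeff_one hZ]
    exact Finset.single_le_sum (f := fun ψ => ‖(sieveProduct T Z).coeff ψ‖)
      (fun _ _ => norm_nonneg _) (Finset.mem_univ 1)
  exact mul_le_mul (sub_le_sub_right (coeffNorm_sieveProduct_le S Y) 1)
    (mul_le_mul_of_nonneg_right (sub_le_sub_right (coeffNorm_sieveProduct_le T Z) 1)
      (Real.sqrt_nonneg _))
    (mul_nonneg (sub_nonneg.mpr one_le) (Real.sqrt_nonneg _))
    (sub_nonneg.mpr (one_le_pow₀ one_le_two))

theorem mul_sub_sqrt_le_card_units_sieve (hY : S.SupIndep Y) (hY_bot : ∀ i ∈ S, Y i ≠ ⊥)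
    (hZ : T.SupIndep Z) (hZ_bot : ∀ j ∈ T, Z j ≠ ⊥) (hT : T.Nonempty) :
    (∏ i ∈ S, (1 - (Nat.card (Y i) : ℝ)⁻¹)) * (∏ j ∈ T, (1 - (Nat.card (Z j) : ℝ)⁻¹)) *
      (Fintype.card E - (2 ^ S.card - 1) * (2 ^ T.card - 1) * √(Fintype.card E)) ≤
    {u : Eˣ | (∀ i ∈ S, ∃ χ ∈ Y i, χ (u : E) ≠ 1) ∧
      ∀ j ∈ T, ∃ ψ ∈ Z j, ψ (u : E) ≠ 1}.ncard := by
  classical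
  set V := ∏ i ∈ S, (1 - (Nat.card (Y i) : ℝ)⁻¹)
  set W := ∏ j ∈ T, (1 - (Nat.card (Z j) : ℝ)⁻¹)
  set A := {u : Eˣ | (∀ i ∈ S, ∃ χ ∈ Y i, χ (u : E) ≠ 1) ∧ ∀ j ∈ T, ∃ ψ ∈ Z j, ψ (u : E) ≠ 1}
  have sum_eq : ∑ u : Eˣ, MonoidAlgebra.lift ℂ ℂ _ (mulCharEval u) (sieveProduct S Y) *
      MonoidAlgebra.lift ℂ ℂ _ (addCharEval (u : E)) (sieveProduct T Z) =
      (A.ncard * (V * W)⁻¹ : ℝ) := by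
    have term (u : Eˣ) : MonoidAlgebra.lift ℂ ℂ _ (mulCharEval u) (sieveProduct S Y) *
        MonoidAlgebra.lift ℂ ℂ _ (addCharEval (u : E)) (sieveProduct T Z) =
        if u ∈ A then (((V * W)⁻¹ : ℝ) : ℂ) else 0 := by
      rw [lift_sieveProduct hY_bot, lift_sieveProduct hZ_bot, ite_zero_mul_ite_zero, mul_inv]
      simp only [V, W]
      push_cast
      congr
    simp only [term]
    rw [← Finset.sum_filter, Finset.sum_const, nsmul_eq_mul, Set.ncard_eq_toFinset_card',
      ← Set.filter_mem_univ_eq_toFinset]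
    push_cast
    rfl
  have upper := norm_sum_sieveProduct_sub_card_le hY hZ hZ_bot hT
  rw [sum_eq, ← Complex.ofReal_natCast (Fintype.card E), ← Complex.ofReal_sub, Complex.norm_real]
    at upper
  have lower := (abs_le.mp upper).1
  have hV : 0 < V := prod_one_sub_inv_card_pos hY_bot
  have hW : 0 < W := prod_one_sub_inv_card_pos hZ_bot
  rw [← le_mul_inv_iff₀' (mul_pos hV hW)]
  linarith

end GaussSumSieve

section FrobeniusModule

open Polynomial

/-- The `q`-power Frobenius of `E`, as an `F`-linear endomorphism, where `q = card F`. It makes `E`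
a module over `F[X]`, in which `P` acts as `aeval (frobEnd F E) P`. -/
noncomputable def frobEnd (F E : Type*) [Field F] [Fintype F] [Field E] [Algebra F E] :
    Module.End F E := (FiniteField.frobeniusAlgHom F E).toLinearMap

/-- `x` is normal over `F`: its conjugates span `E`. This is encoded as `x` generating `E` as a
module over `F[X]` through the Frobenius endomorphism. -/
def IsNormalElement (F : Type*) {E : Type*} [Field F] [Fintype F] [Field E] [Algebra F E] (x : E) :
    Prop := Function.Surjective fun r : F[X] => aeval (frobEnd F E) r x

variable {F E : Type*} [Field F] [Fintype F] [Field E] [Algebra F E]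

lemma frobEnd_pow_apply (i : ℕ) (x : E) : (frobEnd F E ^ i) x = x ^ Fintype.card F ^ i := by
  induction i generalizing x with
  | zero => simp
  | succ n ih =>
    rw [pow_succ, Module.End.mul_apply, ih, pow_succ', pow_mul]
    rfl

lemma aeval_frobEnd_mul_apply (P R : F[X]) (x : E) :
    aeval (frobEnd F E) (P * R) x = aeval (frobEnd F E) P (aeval (frobEnd F E) R x) := by
  rw [map_mul, Module.End.mul_apply]

lemma IsNormalElement.smul {x : E} (hx : IsNormalElement F x) {c : F} (hc : c ≠ 0) :
    IsNormalElement F (c • x) := by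
  intro y
  obtain ⟨r, hr : aeval (frobEnd F E) r x = c⁻¹ • y⟩ := hx (c⁻¹ • y)
  exact ⟨r, by simp only [map_smul, hr, smul_inv_smul₀ hc]⟩

variable [Finite E]

lemma minpoly_frobEnd : minpoly F (frobEnd F E) = X ^ Module.finrank F E - 1 :=
  FiniteField.minpoly_frobeniusAlgHom F E

lemma aeval_frobEnd_X_pow_sub_one :
    aeval (frobEnd F E) (X ^ Module.finrank F E - 1 : F[X]) = 0 := by
  rw [← minpoly_frobEnd, minpoly.aeval]

variable (F E) in
theorem exists_isNormalElement : ∃ w : E, IsNormalElement F w := by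
  classical
  obtain ⟨w, hw⟩ := exists_linearIndependent_algEquiv_apply F E
  have span_conj : Submodule.span F (Set.range fun g : Gal(E/F) => g w) = ⊤ :=
    hw.span_eq_top_of_card_eq_finrank
      (by rw [← Nat.card_eq_fintype_card, IsGalois.card_aut_eq_finrank])
  let φ : F[X] →ₗ[F] E := (LinearMap.applyₗ w).comp (aeval (frobEnd F E)).toLinearMap
  refine ⟨w, (LinearMap.range_eq_top (f := φ)).mp (top_le_iff.mp (span_conj.ge.trans ?_))⟩
  rw [Submodule.span_le]
  rintro _ ⟨g, rfl⟩
  obtain ⟨n, rfl⟩ := (FiniteField.bijective_frobeniusAlgEquivOfAlgebraic_pow F E).2 g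
  refine ⟨X ^ (n : ℕ), ?_⟩
  simp only [φ, LinearMap.comp_apply, LinearMap.applyₗ_apply_apply, AlgHom.toLinearMap_apply,
    map_pow, aeval_X, frobEnd_pow_apply, AlgEquiv.coe_pow,
    FiniteField.coe_frobeniusAlgEquivOfAlgebraic_iterate]

lemma isNormalElement_of_forall_irreducible {x : E} (hx : ∀ P : F[X], Irreducible P → P.Monic →
    P ∣ X ^ Module.finrank F E - 1 → x ∉ LinearMap.range (aeval (frobEnd F E) P)) :
    IsNormalElement F x := by
  classical
  obtain ⟨w, hw⟩ := exists_isNormalElement F E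
  obtain ⟨r, rfl⟩ := hw x
  have coprime : IsCoprime r (X ^ Module.finrank F E - 1) := by
    refine isCoprime_of_irreducible_dvd (fun h => X_pow_sub_C_ne_zero Module.finrank_pos 1 h.2) ?_
    intro P hP hPr hPX
    obtain ⟨s, hs⟩ := (normalize_dvd_iff.mpr hPr)
    refine hx (normalize P) ((normalize_associated P).symm.irreducible hP)
      (monic_normalize hP.ne_zero) (normalize_dvd_iff.mpr hPX) ⟨aeval (frobEnd F E) s w, ?_⟩
    rw [← aeval_frobEnd_mul_apply, ← hs]
  obtain ⟨u, v, huv⟩ := coprime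
  have apply_eq : aeval (frobEnd F E) u (aeval (frobEnd F E) r w) = w := by
    rw [← aeval_frobEnd_mul_apply, eq_sub_of_add_eq huv, map_sub, map_mul,
      aeval_frobEnd_X_pow_sub_one, mul_zero, sub_zero, map_one, Module.End.one_apply]
  intro y
  obtain ⟨s, rfl⟩ := hw y
  exact ⟨s * u, by simp only [aeval_frobEnd_mul_apply, apply_eq]⟩

lemma IsNormalElement.span {x : E} (hx : IsNormalElement F x) :
    Submodule.span F (Set.range fun i : Fin (Module.finrank F E) =>
      x ^ Fintype.card F ^ (i : ℕ)) = ⊤ := by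
  rw [eq_top_iff]
  rintro y -
  obtain ⟨r, rfl⟩ := hx y
  have hm : Module.finrank F E ≠ 0 := Module.finrank_pos.ne'
  set s := r %ₘ (X ^ Module.finrank F E - C 1) with hs
  have aeval_mod : aeval (frobEnd F E) r = aeval (frobEnd F E) s := by
    conv_lhs => rw [← modByMonic_add_div r (X ^ Module.finrank F E - C 1)]
    rw [map_add, map_mul, C_1, aeval_frobEnd_X_pow_sub_one, zero_mul, add_zero, hs, C_1]
  have degree_lt : s.natDegree < Module.finrank F E := by
    have := natDegree_modByMonic_lt r (monic_X_pow_sub_C (1 : F) hm)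
      (ne_of_apply_ne natDegree (by rwa [natDegree_X_pow_sub_C, natDegree_one]))
    rwa [natDegree_X_pow_sub_C] at this
  simp only [aeval_mod, aeval_eq_sum_range' degree_lt, LinearMap.sum_apply, LinearMap.smul_apply,
    frobEnd_pow_apply]
  exact Submodule.sum_mem _ fun i hi => Submodule.smul_mem _ _
    (Submodule.subset_span ⟨⟨i, Finset.mem_range.mp hi⟩, rfl⟩)

lemma IsNormalElement.linearIndependent {x : E} (hx : IsNormalElement F x) :
    LinearIndependent F fun i : Fin (Module.finrank F E) => x ^ Fintype.card F ^ (i : ℕ) :=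
  linearIndependent_of_top_le_span_of_card_eq_finrank hx.span.ge (Fintype.card_fin _)

lemma finrank_quotient_range_aeval_frobEnd {P : F[X]} (hP : P ∣ X ^ Module.finrank F E - 1) :
    Module.finrank F (E ⧸ LinearMap.range (aeval (frobEnd F E) P)) = P.natDegree := by
  obtain ⟨w, hw⟩ := exists_isNormalElement F E
  let φ : F[X] →ₗ[F] E ⧸ LinearMap.range (aeval (frobEnd F E) P) :=
    Submodule.mkQ _ ∘ₗ LinearMap.applyₗ w ∘ₗ (aeval (frobEnd F E)).toLinearMap
  have surjective : Function.Surjective φ := (Submodule.mkQ_surjective _).comp hw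
  have ker_eq : LinearMap.ker φ = (Ideal.span {P}).restrictScalars F := by
    ext r
    have mem_ker : r ∈ LinearMap.ker φ ↔
        aeval (frobEnd F E) r w ∈ LinearMap.range (aeval (frobEnd F E) P) :=
      Submodule.Quotient.mk_eq_zero _
    rw [mem_ker, Submodule.restrictScalars_mem, Ideal.mem_span_singleton]
    refine ⟨?_, fun ⟨s, hs⟩ => ⟨aeval (frobEnd F E) s w, by rw [hs, aeval_frobEnd_mul_apply]⟩⟩
    rintro ⟨y, hy⟩
    obtain ⟨s, rfl⟩ := hw y
    have annihilates : aeval (frobEnd F E) (r - P * s) = 0 := by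
      ext z
      obtain ⟨t, rfl⟩ := hw z
      simp only [← aeval_frobEnd_mul_apply] at hy ⊢
      rw [mul_comm, aeval_frobEnd_mul_apply, map_sub, LinearMap.sub_apply, ← hy, sub_self, map_zero,
        LinearMap.zero_apply]
    have := hP.trans (minpoly_frobEnd (F := F) (E := E) ▸ minpoly.dvd F _ annihilates)
    exact (dvd_sub_left (dvd_mul_right P s)).mp this
  rw [← (φ.quotKerEquivOfSurjective surjective).finrank_eq, ← finrank_quotient_span_eq_natDegree,
    ker_eq]
  rfl

end FrobeniusModule

section TorsionCharacters

variable {G : Type*} [CommGroup G]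

lemma disjoint_ker_powMonoidHom {k l : ℕ} (h : k.Coprime l) :
    Disjoint (powMonoidHom k : G →* G).ker (powMonoidHom l : G →* G).ker := by
  refine Subgroup.disjoint_def.mpr fun {x} hk hl => ?_
  have hkl : orderOf x ∣ k.gcd l :=
    Nat.dvd_gcd (orderOf_dvd_of_pow_eq_one hk) (orderOf_dvd_of_pow_eq_one hl)
  rwa [h.gcd_eq_one, Nat.dvd_one, orderOf_eq_one_iff] at hkl

variable (G) in
lemma supIndep_ker_powMonoidHom {S : Finset ℕ} (hS : ∀ l ∈ S, l.Prime) :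
    S.SupIndep fun l => (powMonoidHom l : G →* G).ker := by
  intro S' hS' l hl hlS'
  have sup_le : (S'.sup fun k => (powMonoidHom k : G →* G).ker) ≤
      (powMonoidHom (∏ k ∈ S', k) : G →* G).ker := by
    refine Finset.sup_le fun k hk x (hx : x ^ k = 1) => ?_
    rw [MonoidHom.mem_ker, powMonoidHom_apply, ← Finset.mul_prod_erase S' _ hk, pow_mul, hx,
      one_pow]
  refine (disjoint_ker_powMonoidHom (Nat.Coprime.prod_right fun k hk => ?_)).mono_right sup_le
  exact (Nat.coprime_primes (hS l hl) (hS k (hS' hk))).mpr fun h => hlS' (h ▸ hk)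

lemma card_ker_powMonoidHom_mulChar {E : Type*} [Field E] [Fintype E] {l : ℕ}
    (hl : l ∣ Fintype.card E - 1) :
    Nat.card (powMonoidHom l : MulChar E ℂ →* MulChar E ℂ).ker = l := by
  have : IsCyclic (MulChar E ℂ) :=
    isCyclic_of_surjective _ (MulChar.mulEquiv_units E ℂ).some.symm.surjective
  rw [IsCyclic.card_powMonoidHom_ker, MulChar.card_eq_card_units_of_hasEnoughRootsOfUnity,
    Nat.card_units, Nat.card_eq_fintype_card, Nat.gcd_eq_right hl]

lemma pow_ne_of_mulChar_apply_ne_one {E : Type*} [Field E] {l : ℕ} {χ : MulChar E ℂ}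
    (hl : χ ^ l = 1) {u : Eˣ} (hu : χ u ≠ 1) (y : E) : y ^ l ≠ u := by
  rintro hy
  obtain rfl | hl0 := eq_or_ne l 0
  · exact hu (by rw [← hy, pow_zero, map_one])
  · have hy_unit : IsUnit y := (isUnit_pow_iff hl0).mp (hy ▸ u.isUnit)
    rw [← hy, map_pow, ← MulChar.pow_apply' χ hl0, hl, MulChar.one_apply hy_unit] at hu
    exact hu rfl

end TorsionCharacters

section CharAnnihilator

/-- The annihilator of an additive subgroup `W` in the character group: the characters trivial on
`W`. -/
def charAnnihilator {A : Type*} [AddCommGroup A] (W : AddSubgroup A) : Subgroup (AddChar A ℂ) where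
  carrier := {ψ | ∀ w ∈ W, ψ w = 1}
  one_mem' w _ := AddChar.one_apply w
  mul_mem' {ψ η} hψ hη w hw := by rw [AddChar.mul_apply, hψ w hw, hη w hw, one_mul]
  inv_mem' {ψ} hψ w hw := by rw [AddChar.inv_apply, hψ _ (W.neg_mem hw)]

variable {A : Type*} [AddCommGroup A]

lemma charAnnihilator_anti : Antitone (charAnnihilator (A := A)) :=
  fun _ _ h _ hψ w hw => hψ w (h hw)

lemma disjoint_charAnnihilator {V W : AddSubgroup A} (h : V ⊔ W = ⊤) :
    Disjoint (charAnnihilator V) (charAnnihilator W) := by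
  refine Subgroup.disjoint_def.mpr fun {ψ} hV hW => ?_
  ext x
  obtain ⟨v, hv, w, hw, rfl⟩ := AddSubgroup.mem_sup.mp (h ▸ AddSubgroup.mem_top x)
  rw [AddChar.map_add_eq_mul, hV v hv, hW w hw, one_mul, AddChar.one_apply]

lemma card_charAnnihilator [Finite A] (W : AddSubgroup A) :
    Nat.card (charAnnihilator W) = Nat.card (A ⧸ W) := by
  classical
  have := Fintype.ofFinite (A ⧸ W)
  let pullback (ψ : AddChar (A ⧸ W) ℂ) : charAnnihilator W :=
    ⟨ψ.compAddMonoidHom (QuotientAddGroup.mk' W), fun w hw => by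
      rw [AddChar.compAddMonoidHom_apply, QuotientAddGroup.mk'_apply,
        (QuotientAddGroup.eq_zero_iff w).mpr hw, AddChar.map_zero_eq_one]⟩
  have bijective : Function.Bijective pullback := by
    refine ⟨fun ψ η h => AddChar.compAddMonoidHom_injective_left _
      (QuotientAddGroup.mk'_surjective W) (congrArg Subtype.val h), fun ⟨ψ, hψ⟩ => ?_⟩
    refine ⟨AddChar.toAddMonoidHomEquiv.symm
      (QuotientAddGroup.lift W (AddChar.toAddMonoidHomEquiv ψ) hψ), Subtype.ext ?_⟩
    ext x
    rfl
  rw [← Nat.card_eq_of_bijective pullback bijective, Nat.card_eq_fintype_card, AddChar.card_eq,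
    Nat.card_eq_fintype_card]

end CharAnnihilator

section NormalSieve

open Polynomial

variable {F E : Type*} [Field F] [Fintype F] [Field E] [Algebra F E]

/-- The additive characters of `E` that are trivial on the image of `P`, acting on `E` through the
Frobenius endomorphism. -/
noncomputable def frobAnnihilator (E : Type*) [Field E] [Algebra F E] (P : F[X]) :
    Subgroup (AddChar E ℂ) :=
  charAnnihilator (LinearMap.range (aeval (frobEnd F E) P)).toAddSubgroup

lemma frobAnnihilator_le_of_dvd {P R : F[X]} (h : P ∣ R) :
    frobAnnihilator E P ≤ frobAnnihilator E R := by
  obtain ⟨s, rfl⟩ := h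
  refine charAnnihilator_anti ?_
  rintro _ ⟨y, rfl⟩
  exact ⟨aeval (frobEnd F E) s y, (aeval_frobEnd_mul_apply P s y).symm⟩

lemma disjoint_frobAnnihilator {P R : F[X]} (h : IsCoprime P R) :
    Disjoint (frobAnnihilator E P) (frobAnnihilator E R) := by
  obtain ⟨u, v, huv⟩ := h
  refine disjoint_charAnnihilator (eq_top_iff.mpr fun x _ => ?_)
  refine AddSubgroup.mem_sup.mpr ⟨_, ⟨aeval (frobEnd F E) u x, rfl⟩, _,
    ⟨aeval (frobEnd F E) v x, rfl⟩, ?_⟩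
  rw [← aeval_frobEnd_mul_apply, ← aeval_frobEnd_mul_apply, ← LinearMap.add_apply, ← map_add,
    mul_comm P, mul_comm R, huv, map_one, Module.End.one_apply]

variable (E) in
lemma supIndep_frobAnnihilator {T : Finset F[X]} (hT : ∀ P ∈ T, Irreducible P)
    (hT_monic : ∀ P ∈ T, P.Monic) : T.SupIndep (frobAnnihilator E) := by
  intro T' hT' P hP hPT'
  have sup_le : T'.sup (frobAnnihilator E) ≤ frobAnnihilator E (∏ R ∈ T', R) :=
    Finset.sup_le fun R hR => frobAnnihilator_le_of_dvd (Finset.dvd_prod_of_mem _ hR)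
  refine (disjoint_frobAnnihilator (IsCoprime.prod_right fun R hR => ?_)).mono_right sup_le
  refine (hT P hP).coprime_iff_not_dvd.mpr fun hPR => hPT' ?_
  rwa [eq_of_monic_of_associated (hT_monic P hP) (hT_monic R (hT' hR))
    ((hT P hP).associated_of_dvd (hT R (hT' hR)) hPR)]

/-- The nonzero elements of `E` that are not an `l`-th power for any `l ∈ S` and that do not lie in
the image of any `P ∈ T`, acting on `E` through the Frobenius endomorphism. -/
def sieveSet (E : Type*) [Field E] [Algebra F E] (S : Finset ℕ) (T : Finset F[X]) : Set Eˣ :=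
  {u | (∀ l ∈ S, ∀ y : E, y ^ l ≠ u) ∧
    ∀ P ∈ T, (u : E) ∉ LinearMap.range (aeval (frobEnd F E) P)}

lemma card_frobAnnihilator [Finite E] {P : F[X]} (hP : P ∣ X ^ Module.finrank F E - 1) :
    Nat.card (frobAnnihilator E P) = Fintype.card F ^ P.natDegree := by
  rw [frobAnnihilator, card_charAnnihilator, ← finrank_quotient_range_aeval_frobEnd hP,
    ← Nat.card_eq_fintype_card (α := F)]
  exact Module.natCard_eq_pow_finrank (K := F)
    (V := E ⧸ LinearMap.range (aeval (frobEnd F E) P))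

theorem mul_sub_sqrt_le_ncard_sieveSet [Fintype E] {S : Finset ℕ} {T : Finset F[X]}
    (hS : ∀ l ∈ S, l.Prime)
    (hS_dvd : ∀ l ∈ S, l ∣ Fintype.card E - 1) (hT : ∀ P ∈ T, Irreducible P)
    (hT_monic : ∀ P ∈ T, P.Monic) (hT_dvd : ∀ P ∈ T, P ∣ X ^ Module.finrank F E - 1)
    (hT_nonempty : T.Nonempty) :
    (∏ l ∈ S, (1 - (l : ℝ)⁻¹)) * (∏ P ∈ T, (1 - ((Fintype.card F : ℝ) ^ P.natDegree)⁻¹)) *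
      (Fintype.card E - (2 ^ S.card - 1) * (2 ^ T.card - 1) * √(Fintype.card E)) ≤
    (sieveSet E S T).ncard := by
  have card_mul {l : ℕ} (hl : l ∈ S) := card_ker_powMonoidHom_mulChar (hS_dvd l hl)
  have card_add {P : F[X]} (hP : P ∈ T) := card_frobAnnihilator (hT_dvd P hP)
  have sieve := mul_sub_sqrt_le_card_units_sieve (supIndep_ker_powMonoidHom (MulChar E ℂ) hS)
    (fun l hl h => by
      rw [← Subgroup.card_eq_one, card_mul hl] at h
      exact (hS l hl).one_lt.ne' h)
    (supIndep_frobAnnihilator E hT hT_monic)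
    (fun P hP h => by
      rw [← Subgroup.card_eq_one, card_add hP] at h
      exact (Nat.one_lt_pow (hT P hP).natDegree_pos.ne' Fintype.one_lt_card).ne' h)
    hT_nonempty
  rw [Finset.prod_congr (s₁ := S) rfl fun l hl => by rw [card_mul hl],
    Finset.prod_congr (s₁ := T) rfl fun P hP => by rw [card_add hP, Nat.cast_pow]] at sieve
  refine sieve.trans (Nat.cast_le.mpr (Set.ncard_le_ncard ?_ (Set.toFinite _)))
  rintro u ⟨hu_mul, hu_add⟩
  refine ⟨fun l hl y => ?_, fun P hP hu => ?_⟩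
  · obtain ⟨χ, hχ, hχu⟩ := hu_mul l hl
    exact pow_ne_of_mulChar_apply_ne_one hχ hχu y
  · obtain ⟨ψ, hψ, hψu⟩ := hu_add P hP
    exact hψu (hψ u hu)

end NormalSieve

section Repunit

/-- The number `1 + q + ⋯ + q ^ (m - 1)`, which is `(q ^ m - 1) / (q - 1)` for `q ≥ 2`: the index of
`Fˣ` in `Eˣ`. -/
def repunit (q m : ℕ) : ℕ := ∑ i ∈ Finset.range m, q ^ i

variable {q m : ℕ}

lemma repunit_eq_div (hq : 2 ≤ q) : repunit q m = (q ^ m - 1) / (q - 1) := Nat.geomSum_eq hq m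

lemma repunit_mul_sub_one (hq : 2 ≤ q) : repunit q m * (q - 1) = q ^ m - 1 := by
  rw [repunit_eq_div hq, Nat.div_mul_cancel (Nat.sub_one_dvd_pow_sub_one q m)]

lemma repunit_ne_zero (hq : 2 ≤ q) (hm : m ≠ 0) : repunit q m ≠ 0 := by
  refine left_ne_zero_of_mul (b := q - 1) ?_
  rw [repunit_mul_sub_one hq]
  exact Nat.sub_ne_zero_of_lt (Nat.one_lt_pow hm hq)

lemma coprime_repunit (hq : 2 ≤ q) (h : m.Coprime (q - 1)) : (repunit q m).Coprime (q - 1) := by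
  have hq_mod : q ≡ 1 [MOD q - 1] := ((Nat.modEq_iff_dvd' (by lia)).mpr dvd_rfl).symm
  have repunit_mod : repunit q m ≡ ∑ _i ∈ Finset.range m, 1 [MOD q - 1] :=
    Nat.ModEq.sum fun i _ => by simpa only [one_pow] using hq_mod.pow i
  rw [Nat.Coprime, repunit_mod.gcd_eq, Finset.sum_const, Finset.card_range, smul_eq_mul, mul_one, h]

lemma odd_repunit (hq : 2 ≤ q) (hm : m ≠ 0) (h : m.Coprime (q - 1)) : Odd (repunit q m) := by
  obtain hq_even | hq_odd := q.even_or_odd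
  · have : Odd (q ^ m - 1) :=
      Nat.Even.sub_odd (Nat.one_le_pow _ _ (by lia)) (hq_even.pow_of_ne_zero hm) odd_one
    exact Nat.Odd.of_mul_left (repunit_mul_sub_one hq ▸ this)
  · have : 2 ∣ q - 1 := (Nat.Odd.sub_odd hq_odd odd_one).two_dvd
    exact Nat.coprime_two_right.mp ((coprime_repunit hq h).coprime_dvd_right this)

end Repunit

section Order

lemma exists_pow_eq_of_pow_eq_one {G : Type*} [Group G] [IsCyclic G] [Finite G] {k l : ℕ}
    (h : k * l ∣ Nat.card G) {g : G} (hg : g ^ k = 1) : ∃ y : G, y ^ l = g := by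
  obtain ⟨a, ha⟩ := IsCyclic.exists_monoid_generator (α := G)
  obtain ⟨j, rfl⟩ := ha g
  beta_reduce at hg ⊢
  rw [← pow_mul, ← orderOf_dvd_iff_pow_eq_one, orderOf_eq_card_of_forall_mem_powers ha] at hg
  have hk : 0 < k := Nat.pos_of_ne_zero fun hk => Nat.card_pos.ne' (by simpa [hk] using h)
  obtain ⟨i, rfl⟩ : l ∣ j := Nat.dvd_of_mul_dvd_mul_left hk (mul_comm j k ▸ h.trans hg)
  exact ⟨a ^ i, by rw [← pow_mul, mul_comm]⟩

variable {F E : Type*} [Field F] [Fintype F] [Field E] [Algebra F E]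

lemma card_units_eq_repunit_mul [Finite E] : Nat.card Eˣ =
    repunit (Fintype.card F) (Module.finrank F E) * (Fintype.card F - 1) := by
  rw [repunit_mul_sub_one Fintype.one_lt_card, ← Nat.card_eq_fintype_card (α := F),
    ← Module.natCard_eq_pow_finrank, Nat.card_units]

lemma dvd_card_sub_one_of_dvd_repunit [Fintype E] {l : ℕ}
    (hl : l ∣ repunit (Fintype.card F) (Module.finrank F E)) : l ∣ Fintype.card E - 1 := by
  rw [Module.card_eq_pow_finrank (K := F) (V := E), ← repunit_mul_sub_one Fintype.one_lt_card]
  exact hl.mul_right _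

lemma algebraMap_norm_eq_pow_repunit [Finite E] (x : E) : algebraMap F E (Algebra.norm F x) =
    x ^ repunit (Fintype.card F) (Module.finrank F E) := by
  rw [FiniteField.algebraMap_norm_eq_pow, Module.natCard_eq_pow_finrank (K := F) (V := E),
    Nat.card_eq_fintype_card, repunit_eq_div Fintype.one_lt_card]

theorem exists_smul_orderOf_eq_repunit [Finite E]
    (hcop : (repunit (Fintype.card F) (Module.finrank F E)).Coprime (Fintype.card F - 1)) {x : Eˣ}
    (hx : ∀ l : ℕ, l.Prime → l ∣ repunit (Fintype.card F) (Module.finrank F E) →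
      ∀ y : Eˣ, y ^ l ≠ x) :
    ∃ c : Fˣ, orderOf (c • (x : E)) = repunit (Fintype.card F) (Module.finrank F E) := by
  have card_units : Nat.card Fˣ = Fintype.card F - 1 := by
    rw [Nat.card_units, Nat.card_eq_fintype_card]
  have card_units_ext := card_units_eq_repunit_mul (F := F) (E := E)
  have norm_eq := algebraMap_norm_eq_pow_repunit (F := F) (x : E)
  set Q := repunit (Fintype.card F) (Module.finrank F E)
  obtain ⟨c, hc : c ^ Q = (Units.map (Algebra.norm F) x)⁻¹⟩ :=
    (Nat.Coprime.pow_left_bijective (card_units ▸ hcop.symm)).2 _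
  let ι : Fˣ →* Eˣ := Units.map (algebraMap F E)
  have pow_eq_one : (ι c * x) ^ Q = 1 := by
    have norm_unit : ι (Units.map (Algebra.norm F) x) = x ^ Q := Units.ext norm_eq
    rw [mul_pow, ← map_pow, hc, map_inv, norm_unit, inv_mul_cancel]
  refine ⟨c, ?_⟩
  rw [Units.smul_def, Algebra.smul_def]
  refine (orderOf_units (y := ι c * x)).trans (orderOf_eq_of_pow_and_pow_div_prime
    (Nat.pos_of_ne_zero (repunit_ne_zero Fintype.one_lt_card Module.finrank_pos.ne'))
    pow_eq_one fun l hl hlQ hpow => ?_)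
  obtain ⟨y, hy⟩ := exists_pow_eq_of_pow_eq_one (l := l)
    (by rw [Nat.div_mul_cancel hlQ, card_units_ext]; exact dvd_mul_right Q _) hpow
  obtain ⟨d, hd : d ^ l = c⟩ := (Nat.Coprime.pow_left_bijective
    (card_units ▸ (hcop.coprime_dvd_left hlQ).symm)).2 c
  refine hx l hl hlQ ((ι d)⁻¹ * y) ?_
  rw [mul_pow, inv_pow, ← map_pow, hd, hy, inv_mul_cancel_left]

end Order

section UnityFactors

open Polynomial

open Classical in
/-- The set of monic irreducible factors of `X ^ m - 1` over `F`. -/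
noncomputable def unityFactors (F : Type*) [Field F] (m : ℕ) : Finset F[X] :=
  (UniqueFactorizationMonoid.normalizedFactors (X ^ m - 1 : F[X])).toFinset

variable {F : Type*} [Field F] {m : ℕ}

lemma mem_unityFactors (hm : m ≠ 0) {P : F[X]} :
    P ∈ unityFactors F m ↔ Irreducible P ∧ P.Monic ∧ P ∣ X ^ m - 1 := by
  classical
  have ne_zero : (X ^ m - 1 : F[X]) ≠ 0 := X_pow_sub_C_ne_zero (Nat.pos_of_ne_zero hm) 1
  rw [unityFactors, Multiset.mem_toFinset, Polynomial.mem_normalizedFactors_iff ne_zero]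

variable (F) in
lemma X_sub_one_mem_unityFactors (hm : m ≠ 0) : X - C 1 ∈ unityFactors F m :=
  (mem_unityFactors hm).mpr
    ⟨irreducible_X_sub_C 1, monic_X_sub_C 1, C_1 (R := F) ▸ sub_one_dvd_pow_sub_one X m⟩

lemma sum_natDegree_le_of_subset (hm : m ≠ 0) {T : Finset F[X]} (hT : T ⊆ unityFactors F m) :
    ∑ P ∈ T, P.natDegree ≤ m := by
  have X_pow_ne_zero : (X ^ m - C 1 : F[X]) ≠ 0 := X_pow_sub_C_ne_zero (Nat.pos_of_ne_zero hm) 1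
  have prod_dvd : ∏ P ∈ T, P ∣ X ^ m - C 1 := by
    refine Finset.prod_dvd_of_coprime (fun P hP R hR hne => ?_)
      fun P hP => C_1 (R := F) ▸ ((mem_unityFactors hm).mp (hT hP)).2.2
    obtain ⟨hP_irr, hP_monic, -⟩ := (mem_unityFactors hm).mp (hT hP)
    obtain ⟨hR_irr, hR_monic, -⟩ := (mem_unityFactors hm).mp (hT hR)
    exact hP_irr.coprime_iff_not_dvd.mpr fun hd =>
      hne (eq_of_monic_of_associated hP_monic hR_monic (hP_irr.associated_of_dvd hR_irr hd))
  rw [← natDegree_prod _ _ fun P hP => ((mem_unityFactors hm).mp (hT hP)).1.ne_zero]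
  exact (natDegree_le_of_dvd prod_dvd X_pow_ne_zero).trans_eq natDegree_X_pow_sub_C

variable [Fintype F]

lemma unityFactors_mul_subset {d n j : ℕ} (hd : d ∣ Fintype.card F ^ j) (hn : n ≠ 0) :
    unityFactors F (d * n) ⊆ unityFactors F n := by
  obtain ⟨s, hp, hcard⟩ := FiniteField.card F (ringChar F)
  have := Fact.mk hp
  rw [hcard, ← pow_mul] at hd
  obtain ⟨k, -, rfl⟩ := (Nat.dvd_prime_pow hp).mp hd
  intro P hP
  rw [mem_unityFactors (mul_ne_zero (pow_ne_zero k hp.ne_zero) hn)] at hP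
  rw [mem_unityFactors hn]
  refine ⟨hP.1, hP.2.1, hP.1.prime.dvd_of_dvd_pow (n := ringChar F ^ k) ?_⟩
  rw [sub_pow_char_pow, one_pow, ← pow_mul, mul_comm]
  exact hP.2.2

lemma dvd_X_pow_gcd_sub_one (hm : m ≠ 0) {P : F[X]} (hP : Irreducible P) (hPm : P ∣ X ^ m - 1) :
    P ∣ X ^ m.gcd (Fintype.card F ^ P.natDegree - 1) - 1 := by
  have dvd_iff (n : ℕ) : P ∣ X ^ n - 1 ↔ AdjoinRoot.root P ^ n = 1 := by
    rw [← AdjoinRoot.mk_eq_zero, map_sub, map_pow, map_one, AdjoinRoot.mk_X, sub_eq_zero]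
  have not_dvd_X : ¬ P ∣ X := fun h => hP.not_isUnit (isUnit_of_dvd_one
    ((dvd_sub_right (h.trans (dvd_pow_self X hm))).mp hPm))
  have dvd_pow_card : P ∣ X ^ (Fintype.card F ^ P.natDegree - 1) - 1 := by
    have := hP.natDegree_dvd_iff_dvd_X_pow_card_pow_sub_X.mp dvd_rfl
    rw [Nat.card_eq_fintype_card, ← mul_pow_sub_one (pow_ne_zero _ Fintype.card_ne_zero),
      ← mul_sub_one] at this
    exact (hP.prime.dvd_or_dvd this).resolve_left not_dvd_X
  rw [dvd_iff] at hPm dvd_pow_card ⊢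
  exact orderOf_dvd_iff_pow_eq_one.mp
    (Nat.dvd_gcd (orderOf_dvd_of_pow_eq_one hPm) (orderOf_dvd_of_pow_eq_one dvd_pow_card))

open Classical in
variable (F) in
lemma card_filter_natDegree_eq_le (hm : m ≠ 0) {d : ℕ} (hd : d ≠ 0) :
    {P ∈ unityFactors F m | P.natDegree = d}.card ≤ m.gcd (Fintype.card F ^ d - 1) / d := by
  have hg : m.gcd (Fintype.card F ^ d - 1) ≠ 0 := Nat.gcd_ne_zero_left hm
  have subset : {P ∈ unityFactors F m | P.natDegree = d} ⊆
      unityFactors F (m.gcd (Fintype.card F ^ d - 1)) := by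
    intro P hP
    obtain ⟨hP_mem, rfl⟩ := Finset.mem_filter.mp hP
    obtain ⟨hP_irr, hP_monic, hP_dvd⟩ := (mem_unityFactors hm).mp hP_mem
    exact (mem_unityFactors hg).mpr
      ⟨hP_irr, hP_monic, dvd_X_pow_gcd_sub_one hm hP_irr hP_dvd⟩
  rw [Nat.le_div_iff_mul_le (Nat.pos_of_ne_zero hd), ← smul_eq_mul, ← Finset.sum_const]
  exact (Finset.sum_congr rfl fun P hP => (Finset.mem_filter.mp hP).2.symm).trans_le
    (sum_natDegree_le_of_subset hg subset)

variable (F) in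
theorem add_one_mul_card_unityFactors_le (hm : m ≠ 0) (D : ℕ) :
    (D + 1) * (unityFactors F m).card ≤
      m + ∑ d ∈ Finset.Icc 1 D, (D + 1 - d) * (m.gcd (Fintype.card F ^ d - 1) / d) := by
  classical
  -- A factor of degree `d ≤ D` is counted `d` times by its degree and `D + 1 - d` times by the
  -- correction terms.
  have le_add_sum {P : F[X]} (hP : P ∈ unityFactors F m) : D + 1 ≤
      P.natDegree + ∑ d ∈ Finset.Icc 1 D, if P.natDegree = d then D + 1 - d else 0 := by
    have := ((mem_unityFactors hm).mp hP).1.natDegree_pos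
    rw [Finset.sum_ite_eq]
    split_ifs with h <;> rw [Finset.mem_Icc] at h <;> lia
  calc (D + 1) * (unityFactors F m).card
    _ ≤ ∑ P ∈ unityFactors F m, (P.natDegree +
        ∑ d ∈ Finset.Icc 1 D, if P.natDegree = d then D + 1 - d else 0) := by
      rw [mul_comm, ← smul_eq_mul]
      exact Finset.card_nsmul_le_sum _ _ _ fun P => le_add_sum
    _ = ∑ P ∈ unityFactors F m, P.natDegree + ∑ d ∈ Finset.Icc 1 D,
        (D + 1 - d) * {P ∈ unityFactors F m | P.natDegree = d}.card := by
      rw [Finset.sum_add_distrib, Finset.sum_comm]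
      simp only [← Finset.sum_filter, Finset.sum_const, smul_eq_mul, mul_comm]
    _ ≤ _ := by
      refine Nat.add_le_add (sum_natDegree_le_of_subset hm subset_rfl)
        (Finset.sum_le_sum fun d hd => Nat.mul_le_mul_left _ (card_filter_natDegree_eq_le F hm ?_))
      exact Nat.one_le_iff_ne_zero.mp (Finset.mem_Icc.mp hd).1

/-- An upper bound for the number of irreducible factors of `X ^ m - 1` over the field with `q`
elements, by a weighted count in which the roots of the factors of degree `d ≤ D` are among the
`(q ^ d - 1)`-th roots of unity. The power of the characteristic dividing `m` is removed first. -/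
def unityFactorBound (q m D : ℕ) : ℕ :=
  let n := m / m.gcd (q ^ m)
  (n + ∑ d ∈ Finset.Icc 1 D, (D + 1 - d) * (n.gcd (q ^ d - 1) / d)) / (D + 1)

variable (F) in
theorem card_unityFactors_le_bound (hm : m ≠ 0) (D : ℕ) :
    (unityFactors F m).card ≤ unityFactorBound (Fintype.card F) m D := by
  set d := m.gcd (Fintype.card F ^ m) with hd
  have mul_div : d * (m / d) = m := Nat.mul_div_cancel' (Nat.gcd_dvd_left _ _)
  have hn : m / d ≠ 0 := right_ne_zero_of_mul (mul_div ▸ hm)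
  have subset := unityFactors_mul_subset (F := F) (d := d) (Nat.gcd_dvd_right _ _) hn
  rw [mul_div] at subset
  rw [unityFactorBound, ← hd, Nat.le_div_iff_mul_le D.succ_pos, mul_comm]
  exact (Nat.mul_le_mul_left _ (Finset.card_le_card subset)).trans
    (add_one_mul_card_unityFactors_le F hn D)

end UnityFactors

section PrimeFactorCount

open Finset

lemma pow_card_primeFactors_mul_prod_le {Q L : ℕ} (hQ : Q ≠ 0) {A : Finset ℕ}
    (hA_le : ∀ l ∈ A, l ≤ L) (hA : ∀ l ∈ Q.primeFactors, l < L → l ∈ A) :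
    L ^ Q.primeFactors.card * ∏ l ∈ A, l ≤ L ^ A.card * Q := by
  set S := Q.primeFactors
  have prod_sdiff_le : ∏ l ∈ A \ S, l ≤ L ^ (A \ S).card :=
    prod_le_pow_card _ _ _ fun l hl => hA_le l (mem_sdiff.mp hl).1
  have le_prod_sdiff : L ^ (S \ A).card ≤ ∏ l ∈ S \ A, l := by
    refine pow_card_le_prod _ _ _ fun l hl => ?_
    obtain ⟨hl_mem, hl_notMem⟩ := mem_sdiff.mp hl
    exact not_lt.mp fun hlt => hl_notMem (hA l hl_mem hlt)
  have prod_le : ∏ l ∈ S, l ≤ Q := Nat.le_of_dvd (Nat.pos_of_ne_zero hQ) Q.prod_primeFactors_dvd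
  rw [← card_inter_add_card_sdiff S A, ← card_inter_add_card_sdiff A S, inter_comm A S, pow_add,
    pow_add, ← prod_inter_mul_prod_sdiff A S, inter_comm A S]
  calc L ^ (S ∩ A).card * L ^ (S \ A).card * ((∏ l ∈ S ∩ A, l) * ∏ l ∈ A \ S, l)
    _ ≤ L ^ (S ∩ A).card * (∏ l ∈ S \ A, l) * ((∏ l ∈ S ∩ A, l) * L ^ (A \ S).card) := by gcongr
    _ = L ^ (S ∩ A).card * L ^ (A \ S).card * ∏ l ∈ S, l := by
      rw [← prod_inter_mul_prod_sdiff S A]; ring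
    _ ≤ _ := by gcongr

lemma sixteen_pow_card_primeFactors_le {Q : ℕ} (hQ : Odd Q) :
    16 ^ Q.primeFactors.card * 15015 ≤ 16 ^ 5 * Q := by
  refine pow_card_primeFactors_mul_prod_le (A := {3, 5, 7, 11, 13}) hQ.pos.ne' (by decide) ?_
  intro l hl hlt
  have prime_lt : ∀ l < 16, l.Prime → l ≠ 2 → l ∈ ({3, 5, 7, 11, 13} : Finset ℕ) := by decide
  refine prime_lt l hlt (Nat.prime_of_mem_primeFactors hl) ?_
  rintro rfl
  exact Nat.not_even_iff_odd.mpr hQ (even_iff_two_dvd.mpr (Nat.dvd_of_mem_primeFactors hl))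

/-- A computable upper bound for the number of prime factors of `Q`: those below `L` are counted
exactly, and the others as if each of them were equal to `L`. -/
def primeFactorBound (Q L : ℕ) : ℕ :=
  let A := {l ∈ range L | l ∣ Q ∧ l.Prime}
  A.card + Nat.log L (Q / ∏ l ∈ A, l)

lemma card_primeFactors_le_bound {Q L : ℕ} (hQ : Q ≠ 0) (hL : 1 < L) :
    Q.primeFactors.card ≤ primeFactorBound Q L := by
  rw [primeFactorBound]
  set A := {l ∈ range L | l ∣ Q ∧ l.Prime}
  have A_subset : A ⊆ Q.primeFactors := fun l hl => by
    obtain ⟨-, hl_dvd, hl_prime⟩ := mem_filter.mp hl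
    exact Nat.mem_primeFactors.mpr ⟨hl_prime, hl_dvd, hQ⟩
  have prod_pos : 0 < ∏ l ∈ A, l :=
    prod_pos fun l hl => (Nat.prime_of_mem_primeFactors (A_subset hl)).pos
  have le := pow_card_primeFactors_mul_prod_le (A := A) hQ
    (fun l hl => (mem_range.mp (mem_filter.mp hl).1).le) fun l hl hlt => mem_filter.mpr
      ⟨mem_range.mpr hlt, Nat.dvd_of_mem_primeFactors hl, Nat.prime_of_mem_primeFactors hl⟩
  obtain ⟨k, hk⟩ := Nat.exists_eq_add_of_le (card_le_card A_subset)
  rw [hk, pow_add, mul_assoc] at le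
  rw [hk]
  refine Nat.add_le_add_left (Nat.le_log_of_pow_le hL ?_) _
  exact (Nat.le_div_iff_mul_le prod_pos).mpr (Nat.le_of_mul_le_mul_left le (by positivity))

end PrimeFactorCount

section SieveCriteria

open Polynomial

variable {F E : Type*} [Field F] [Fintype F] [Field E] [Algebra F E]

theorem mul_sub_sqrt_le_ncard_sieveSet_unityFactors [Fintype E] {S : Finset ℕ}
    (hS : S ⊆ (repunit (Fintype.card F) (Module.finrank F E)).primeFactors) :
    (∏ l ∈ S, (1 - (l : ℝ)⁻¹)) * (∏ P ∈ unityFactors F (Module.finrank F E),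
      (1 - ((Fintype.card F : ℝ) ^ P.natDegree)⁻¹)) * (Fintype.card E -
        (2 ^ S.card - 1) * (2 ^ (unityFactors F (Module.finrank F E)).card - 1) *
          √(Fintype.card E)) ≤
    (sieveSet E S (unityFactors F (Module.finrank F E))).ncard := by
  have hm : Module.finrank F E ≠ 0 := Module.finrank_pos.ne'
  refine mul_sub_sqrt_le_ncard_sieveSet (fun l hl => Nat.prime_of_mem_primeFactors (hS hl))
    (fun l hl => dvd_card_sub_one_of_dvd_repunit (Nat.dvd_of_mem_primeFactors (hS hl)))
    (fun P hP => ((mem_unityFactors hm).mp hP).1)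
    (fun P hP => ((mem_unityFactors hm).mp hP).2.1)
    (fun P hP => ((mem_unityFactors hm).mp hP).2.2) ⟨_, X_sub_one_mem_unityFactors F hm⟩

lemma prod_one_sub_inv_pos {S : Finset ℕ} (hS : ∀ l ∈ S, l.Prime) :
    0 < ∏ l ∈ S, (1 - (l : ℝ)⁻¹) :=
  Finset.prod_pos fun l hl =>
    sub_pos.mpr (inv_lt_one_of_one_lt₀ (Nat.one_lt_cast.mpr (hS l hl).one_lt))

lemma prod_one_sub_inv_card_pow_pos {T : Finset F[X]} (hT : ∀ P ∈ T, Irreducible P) :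
    0 < ∏ P ∈ T, (1 - ((Fintype.card F : ℝ) ^ P.natDegree)⁻¹) :=
  Finset.prod_pos fun P hP => sub_pos.mpr (inv_lt_one_of_one_lt₀
    (one_lt_pow₀ (Nat.one_lt_cast.mpr Fintype.one_lt_card) (hT P hP).natDegree_pos.ne'))

variable (F E) in
/-- Some normal element of `E` over `F` is not an `l`-th power for any prime `l` dividing
`(q ^ m - 1) / (q - 1)`. Normality is expressed by avoiding the image of every irreducible factor of
`X ^ m - 1`, the form in which the sieve produces it. -/
def ExistsNormalNonPower : Prop :=
  (sieveSet E (repunit (Fintype.card F) (Module.finrank F E)).primeFactors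
    (unityFactors F (Module.finrank F E))).Nonempty

theorem existsNormalNonPower_of_sq_lt [Finite E] {w t : ℕ}
    (hw : (repunit (Fintype.card F) (Module.finrank F E)).primeFactors.card ≤ w)
    (ht : (unityFactors F (Module.finrank F E)).card ≤ t)
    (h : ((2 ^ w - 1) * (2 ^ t - 1)) ^ 2 < Fintype.card F ^ Module.finrank F E) :
    ExistsNormalNonPower F E := by
  cases nonempty_fintype E
  set S := (repunit (Fintype.card F) (Module.finrank F E)).primeFactors
  have hm : Module.finrank F E ≠ 0 := Module.finrank_pos.ne'
  have sq_lt : (((2 : ℝ) ^ S.card - 1) *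
      (2 ^ (unityFactors F (Module.finrank F E)).card - 1)) ^ 2 < Fintype.card E := by
    have le : ((2 ^ S.card - 1) * (2 ^ (unityFactors F (Module.finrank F E)).card - 1)) ^ 2 ≤
        ((2 ^ w - 1) * (2 ^ t - 1)) ^ 2 := by gcongr <;> norm_num
    rw [Module.card_eq_pow_finrank (K := F) (V := E)]
    have := Nat.cast_lt (α := ℝ).mpr (le.trans_lt h)
    push_cast [Nat.one_le_two_pow] at this ⊢
    exact this
  have sieve := mul_sub_sqrt_le_ncard_sieveSet_unityFactors (E := E) (S := S) subset_rfl
  refine (Set.ncard_pos (Set.toFinite _)).mp (Nat.cast_pos.mp (sieve.trans_lt' (mul_pos (mul_pos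
    (prod_one_sub_inv_pos fun l => Nat.prime_of_mem_primeFactors)
    (prod_one_sub_inv_card_pow_pos fun P hP => ((mem_unityFactors hm).mp hP).1)) ?_)))
  have card_pos : (0 : ℝ) < Fintype.card E := Nat.cast_pos.mpr Fintype.card_pos
  calc (_ : ℝ) < √(Fintype.card E) * √(Fintype.card E) - _ * √(Fintype.card E) := by
        rw [← sub_mul]
        exact mul_pos (sub_pos.mpr (Real.lt_sqrt_of_sq_lt sq_lt)) (Real.sqrt_pos.mpr card_pos)
    _ = _ := by rw [Real.mul_self_sqrt card_pos.le]

lemma sq_lt_of_sixteen_pow_le {Q r N w t : ℕ} (hw : 16 ^ w * 15015 ≤ 16 ^ 5 * Q)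
    (ht : 16 ^ 5 * 16 ^ t ≤ 15015 * (r * N)) (hQ : Q * r < N) :
    ((2 ^ w - 1) * (2 ^ t - 1)) ^ 2 < N := by
  have sixteen_pow_le : 16 ^ w * 16 ^ t ≤ Q * r * N := by
    have := Nat.mul_le_mul hw ht
    nlinarith
  have sq_lt : ((2 ^ w * 2 ^ t) ^ 2) ^ 2 < N ^ 2 := by
    calc ((2 ^ w * 2 ^ t) ^ 2) ^ 2 = 16 ^ w * 16 ^ t := by
          rw [← pow_mul, mul_pow, pow_right_comm 2 w, pow_right_comm 2 t]; norm_num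
      _ ≤ Q * r * N := sixteen_pow_le
      _ < N ^ 2 := by rw [sq]; exact Nat.mul_lt_mul_of_pos_right hQ (by lia)
  refine (Nat.pow_le_pow_left ?_ 2).trans_lt (lt_of_pow_lt_pow_left₀ 2 N.zero_le sq_lt)
  exact Nat.mul_le_mul (Nat.sub_le _ _) (Nat.sub_le _ _)

theorem existsNormalNonPower_of_sixteen_pow_le [Finite E] {t : ℕ}
    (hcop : (Module.finrank F E).Coprime (Fintype.card F - 1))
    (ht : (unityFactors F (Module.finrank F E)).card ≤ t)
    (h : 16 ^ 5 * 16 ^ t ≤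
      15015 * ((Fintype.card F - 1) * Fintype.card F ^ Module.finrank F E)) :
    ExistsNormalNonPower F E := by
  have hq : 2 ≤ Fintype.card F := Fintype.one_lt_card
  refine existsNormalNonPower_of_sq_lt le_rfl ht (sq_lt_of_sixteen_pow_le
    (sixteen_pow_card_primeFactors_le (odd_repunit hq Module.finrank_pos.ne' hcop)) h ?_)
  rw [repunit_mul_sub_one hq]
  exact Nat.sub_one_lt (pow_ne_zero _ Fintype.card_ne_zero)

end SieveCriteria

section Cases

open Polynomial

/-- The bound for the contribution of the factors of degree at most `D` to
`add_one_mul_card_unityFactors_le` that depends only on `q`, when `m` is coprime to `q - 1`. -/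
def lowDegreeExcess (q D : ℕ) : ℕ :=
  D + ∑ d ∈ Finset.Icc 2 D, (D + 1 - d) * ((q ^ d - 1) / d)

lemma add_one_mul_card_unityFactors_le_lowDegreeExcess {F : Type*} [Field F] [Fintype F] {m : ℕ}
    (hm : m ≠ 0) (hcop : m.Coprime (Fintype.card F - 1)) (D : ℕ) :
    (D + 1) * (unityFactors F m).card ≤ m + lowDegreeExcess (Fintype.card F) D := by
  refine (add_one_mul_card_unityFactors_le F hm D).trans (Nat.add_le_add_left ?_ m)
  obtain rfl | hD := D.eq_zero_or_pos
  · exact Nat.zero_le _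
  rw [lowDegreeExcess, ← Finset.add_sum_Ioc_eq_sum_Icc hD, pow_one, hcop.gcd_eq_one,
    ← Finset.Icc_add_one_left_eq_Ioc, Nat.add_sub_cancel, Nat.div_one, mul_one]
  have pow_sub_one_pos {d : ℕ} (hd : d ∈ Finset.Icc 2 D) : 0 < Fintype.card F ^ d - 1 :=
    Nat.sub_pos_of_lt (Nat.one_lt_pow (by rw [Finset.mem_Icc] at hd; lia) Fintype.one_lt_card)
  exact Nat.add_le_add_left (Finset.sum_le_sum fun d hd => Nat.mul_le_mul_left _
    (Nat.div_le_div_right (Nat.gcd_le_right m (pow_sub_one_pos hd)))) D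

variable {F E : Type*} [Field F] [Fintype F] [Field E] [Algebra F E]

theorem existsNormalNonPower_of_growth [Finite E]
    (hcop : (Module.finrank F E).Coprime (Fintype.card F - 1)) (D m₀ : ℕ)
    (hm : m₀ ≤ Module.finrank F E) (hq : 16 ≤ Fintype.card F ^ (D + 1))
    (h : 16 ^ (5 * (D + 1) + lowDegreeExcess (Fintype.card F) D + m₀) ≤
      (15015 * ((Fintype.card F - 1) * Fintype.card F ^ m₀)) ^ (D + 1)) :
    ExistsNormalNonPower F E := by
  refine existsNormalNonPower_of_sixteen_pow_le hcop le_rfl ?_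
  rw [← Nat.pow_le_pow_iff_left D.add_one_ne_zero]
  have card_le := add_one_mul_card_unityFactors_le_lowDegreeExcess Module.finrank_pos.ne' hcop D
  obtain ⟨k, hk⟩ := Nat.exists_eq_add_of_le hm
  rw [hk] at card_le ⊢
  set t := (unityFactors F (m₀ + k)).card
  calc (16 ^ 5 * 16 ^ t) ^ (D + 1) = 16 ^ (5 * (D + 1) + (D + 1) * t) := by
        rw [← pow_add, ← pow_mul, add_mul, mul_comm t]
    _ ≤ 16 ^ (5 * (D + 1) + lowDegreeExcess (Fintype.card F) D + m₀ + k) :=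
      Nat.pow_le_pow_right (by simp) (by lia)
    _ ≤ (15015 * ((Fintype.card F - 1) * Fintype.card F ^ m₀)) ^ (D + 1) *
        (Fintype.card F ^ (D + 1)) ^ k := by
      rw [pow_add]
      exact Nat.mul_le_mul h (Nat.pow_le_pow_left hq k)
    _ = _ := by ring

theorem existsNormalNonPower_of_finrank_eq_one [Finite E] (hm : Module.finrank F E = 1) :
    ExistsNormalNonPower F E := by
  refine existsNormalNonPower_of_sq_lt (w := 0) ?_ le_rfl ?_
  · simp [hm, repunit]
  · simp [Fintype.card_pos]

theorem existsNormalNonPower_of_finrank_eq_two [Finite E] (hm : Module.finrank F E = 2)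
    (hcop : (Module.finrank F E).Coprime (Fintype.card F - 1)) (hq : 13 ≤ Fintype.card F) :
    ExistsNormalNonPower F E := by
  have card_even : 2 ∣ Fintype.card F := by
    rw [hm, Nat.coprime_two_left, Nat.odd_iff] at hcop
    lia
  have bound_eq : unityFactorBound (Fintype.card F) 2 0 = 1 := by
    have : Nat.gcd 2 (Fintype.card F ^ 2) = 2 :=
      Nat.gcd_eq_left (card_even.trans (dvd_pow_self _ two_ne_zero))
    simp [unityFactorBound, this]
  refine existsNormalNonPower_of_sixteen_pow_le hcop (card_unityFactors_le_bound F (by lia) 0) ?_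
  rw [hm, bound_eq]
  calc 16 ^ 5 * 16 ^ 1 ≤ 15015 * ((13 - 1) * 13 ^ 2) := by norm_num
    _ ≤ _ := by gcongr

theorem existsNormalNonPower_of_thirteen_le_card [Finite E]
    (hcop : (Module.finrank F E).Coprime (Fintype.card F - 1)) (hq : 13 ≤ Fintype.card F) :
    ExistsNormalNonPower F E := by
  have hm : 0 < Module.finrank F E := Module.finrank_pos
  obtain hm_one | hm_two | hm_three : Module.finrank F E = 1 ∨ Module.finrank F E = 2 ∨
    3 ≤ Module.finrank F E := by lia
  · exact existsNormalNonPower_of_finrank_eq_one hm_one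
  · exact existsNormalNonPower_of_finrank_eq_two hm_two hcop hq
  · refine existsNormalNonPower_of_growth hcop 1 3 hm_three ?_ ?_
    · exact le_trans (by norm_num) (Nat.pow_le_pow_left hq 2)
    · calc 16 ^ 14 ≤ (15015 * ((13 - 1) * 13 ^ 3)) ^ 2 := by norm_num
        _ ≤ _ := by gcongr

theorem existsNormalNonPower_of_hundred_le_finrank [Finite E]
    (hcop : (Module.finrank F E).Coprime (Fintype.card F - 1))
    (hm : 100 ≤ Module.finrank F E) : ExistsNormalNonPower F E := by
  have hq : 2 ≤ Fintype.card F := Fintype.one_lt_card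
  obtain hq_lt | hq_five := lt_or_ge (Fintype.card F) 5
  · refine existsNormalNonPower_of_growth hcop 4 100 hm
      ((Nat.pow_le_pow_left hq 5).trans' (by norm_num)) ?_
    interval_cases Fintype.card F <;> decide +kernel
  · refine existsNormalNonPower_of_growth hcop 1 100 hm
      ((Nat.pow_le_pow_left hq_five 2).trans' (by norm_num)) ?_
    calc 16 ^ 111 ≤ (15015 * ((5 - 1) * 5 ^ 100)) ^ 2 := by norm_num
      _ ≤ _ := by gcongr

/-- The pairs `(q, m)` with `m` coprime to `q - 1` at which the sieve by all prime factors of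
`(q ^ m - 1) / (q - 1)` is not strong enough. -/
def exceptionalPairs : Finset (ℕ × ℕ) := {(2, 3), (2, 6), (2, 15)}

lemma sieve_inequality_of_notMem_exceptionalPairs : ∀ q ∈ Finset.Ico 2 13,
    ∀ m ∈ Finset.Ico 1 100, m.gcd (q - 1) = 1 → (q, m) ∉ exceptionalPairs →
    ((2 ^ primeFactorBound (repunit q m) 32 - 1) * (2 ^ unityFactorBound q m 4 - 1)) ^ 2 <
      q ^ m := by
  decide +kernel

theorem existsNormalNonPower_of_notMem_exceptionalPairs [Finite E]
    (hcop : (Module.finrank F E).Coprime (Fintype.card F - 1))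
    (hne : (Fintype.card F, Module.finrank F E) ∉ exceptionalPairs) : ExistsNormalNonPower F E := by
  have hq : 2 ≤ Fintype.card F := Fintype.one_lt_card
  have hm : 0 < Module.finrank F E := Module.finrank_pos
  obtain hq_lt | hq_ge := lt_or_ge (Fintype.card F) 13
  · obtain hm_lt | hm_ge := lt_or_ge (Module.finrank F E) 100
    · exact existsNormalNonPower_of_sq_lt
        (card_primeFactors_le_bound (repunit_ne_zero hq hm.ne') (by norm_num))
        (card_unityFactors_le_bound F hm.ne' 4)
        (sieve_inequality_of_notMem_exceptionalPairs _ (Finset.mem_Ico.mpr ⟨hq, hq_lt⟩) _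
          (Finset.mem_Ico.mpr ⟨hm, hm_lt⟩) hcop hne)
    · exact existsNormalNonPower_of_hundred_le_finrank hcop hm_ge
  · exact existsNormalNonPower_of_thirteen_le_card hcop hq_ge

end Cases

section LeaveOneOut

open Polynomial

lemma ncard_setOf_exists_pow_eq_le {E : Type*} [Field E] [Fintype E] {l : ℕ} (hl : l ≠ 0)
    (hl_dvd : l ∣ Fintype.card E - 1) :
    {u : Eˣ | ∃ y : E, y ^ l = u}.ncard ≤ (Fintype.card E - 1) / l := by
  have subset : {u : Eˣ | ∃ y : E, y ^ l = u} ⊆ Set.range fun y : Eˣ => y ^ l := by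
    rintro u ⟨y, hy⟩
    have hy_unit : IsUnit y := (isUnit_pow_iff hl).mp (hy ▸ u.isUnit)
    exact ⟨hy_unit.unit, Units.ext hy⟩
  refine (Set.ncard_le_ncard subset (Set.toFinite _)).trans_eq ?_
  rw [← Nat.card_eq_fintype_card, ← Nat.card_units] at hl_dvd ⊢
  have := IsCyclic.card_powMonoidHom_range (G := Eˣ) l
  rw [Nat.gcd_eq_right hl_dvd] at this
  exact this

variable {F E : Type*} [Field F] [Fintype F] [Field E] [Algebra F E]

lemma ncard_sieveSet_le_ncard_sieveSet_insert_add [Fintype E] {S : Finset ℕ} {T : Finset F[X]}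
    {l : ℕ} (hl : l ≠ 0) (hl_dvd : l ∣ Fintype.card E - 1) :
    (sieveSet E S T).ncard ≤ (sieveSet E (insert l S) T).ncard + (Fintype.card E - 1) / l := by
  have subset : sieveSet E S T ⊆ sieveSet E (insert l S) T ∪ {u : Eˣ | ∃ y : E, y ^ l = u} := by
    rintro u ⟨hu_pow, hu_range⟩
    by_cases hu : ∃ y : E, y ^ l = u
    · exact .inr hu
    · exact .inl ⟨(Finset.forall_mem_insert _ _ _).mpr ⟨not_exists.mp hu, hu_pow⟩, hu_range⟩
  exact (Set.ncard_le_ncard subset (Set.toFinite _)).trans ((Set.ncard_union_le _ _).trans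
    (Nat.add_le_add_left (ncard_setOf_exists_pow_eq_le hl hl_dvd) _))

lemma two_le_natDegree_of_mem_unityFactors {m : ℕ} (hm : m ≠ 0)
    (hcop : m.Coprime (Fintype.card F - 1)) {P : F[X]} (hP : P ∈ unityFactors F m)
    (hne : P ≠ X - C 1) : 2 ≤ P.natDegree := by
  classical
  by_contra hlt
  have natDegree_eq : P.natDegree = 1 := by
    have := ((mem_unityFactors hm).mp hP).1.natDegree_pos
    lia
  have card_le : {R ∈ unityFactors F m | R.natDegree = 1}.card ≤ 1 := by
    have := card_filter_natDegree_eq_le F hm one_ne_zero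
    rwa [pow_one, hcop.gcd_eq_one, Nat.div_one] at this
  exact hne (Finset.card_le_one.mp card_le _ (Finset.mem_filter.mpr ⟨hP, natDegree_eq⟩) _
    (Finset.mem_filter.mpr ⟨X_sub_one_mem_unityFactors F hm, natDegree_X_sub_C 1⟩))

lemma le_prod_unityFactors_one_sub_inv {m t : ℕ} (hm : m ≠ 0)
    (hcop : m.Coprime (Fintype.card F - 1)) (ht : (unityFactors F m).card ≤ t + 1) :
    (1 - (Fintype.card F : ℝ)⁻¹) * (1 - ((Fintype.card F : ℝ) ^ 2)⁻¹) ^ t ≤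
      ∏ P ∈ unityFactors F m, (1 - ((Fintype.card F : ℝ) ^ P.natDegree)⁻¹) := by
  classical
  have one_lt : (1 : ℝ) < Fintype.card F := Nat.one_lt_cast.mpr Fintype.one_lt_card
  have nonneg (d : ℕ) : 0 ≤ 1 - ((Fintype.card F : ℝ) ^ d)⁻¹ :=
    sub_nonneg.mpr (inv_le_one_of_one_le₀ (one_le_pow₀ one_lt.le))
  have le_one : 1 - ((Fintype.card F : ℝ) ^ 2)⁻¹ ≤ 1 := sub_le_self _ (by positivity)
  have card_erase_le : ((unityFactors F m).erase (X - C 1)).card ≤ t := by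
    rw [Finset.card_erase_of_mem (X_sub_one_mem_unityFactors F hm)]
    lia
  rw [← Finset.mul_prod_erase _ _ (X_sub_one_mem_unityFactors F hm), natDegree_X_sub_C, pow_one]
  refine mul_le_mul_of_nonneg_left ?_ (pow_one (Fintype.card F : ℝ) ▸ nonneg 1)
  refine (pow_le_pow_of_le_one (nonneg 2) le_one card_erase_le).trans ?_
  rw [← Finset.prod_const]
  refine Finset.prod_le_prod (fun _ _ => nonneg 2) fun P hP => ?_
  obtain ⟨hP_ne, hP_mem⟩ := Finset.mem_erase.mp hP
  have := two_le_natDegree_of_mem_unityFactors hm hcop hP_mem hP_ne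
  gcongr
  exact one_lt.le

theorem mul_sub_le_ncard_sieveSet_unityFactors [Fintype E] {S : Finset ℕ} {t s : ℕ}
    (hcop : (Module.finrank F E).Coprime (Fintype.card F - 1))
    (hS : S ⊆ (repunit (Fintype.card F) (Module.finrank F E)).primeFactors)
    (ht : (unityFactors F (Module.finrank F E)).card ≤ t + 1) (hs : Fintype.card E ≤ s ^ 2) :
    (∏ p ∈ S, (1 - (p : ℝ)⁻¹)) *
      ((1 - (Fintype.card F : ℝ)⁻¹) * (1 - ((Fintype.card F : ℝ) ^ 2)⁻¹) ^ t) *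
        (Fintype.card E - (2 ^ S.card - 1) * (2 ^ (t + 1) - 1) * s) ≤
      (sieveSet E S (unityFactors F (Module.finrank F E))).ncard := by
  have hm : Module.finrank F E ≠ 0 := Module.finrank_pos.ne'
  have prod_S_pos := prod_one_sub_inv_pos fun p hp => Nat.prime_of_mem_primeFactors (hS hp)
  have prod_T_pos := prod_one_sub_inv_card_pow_pos (T := unityFactors F (Module.finrank F E))
    fun P hP => ((mem_unityFactors hm).mp hP).1
  have one_sub_inv_nonneg (d : ℕ) : 0 ≤ 1 - ((Fintype.card F : ℝ) ^ d)⁻¹ := sub_nonneg.mpr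
    (inv_le_one_of_one_le₀ (one_le_pow₀ (Nat.one_le_cast.mpr Fintype.card_pos)))
  have two_pow_sub_one_nonneg (k : ℕ) : (0 : ℝ) ≤ 2 ^ k - 1 :=
    sub_nonneg.mpr (one_le_pow₀ one_le_two)
  have sqrt_le : √(Fintype.card E : ℝ) ≤ s := Real.sqrt_le_iff.mpr ⟨s.cast_nonneg, mod_cast hs⟩
  obtain h_nonneg | h_neg :=
    le_or_gt (0 : ℝ) (Fintype.card E - (2 ^ S.card - 1) * (2 ^ (t + 1) - 1) * s)
  · refine le_trans ?_ (mul_sub_sqrt_le_ncard_sieveSet_unityFactors hS)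
    refine mul_le_mul (mul_le_mul_of_nonneg_left (le_prod_unityFactors_one_sub_inv hm hcop ht)
      prod_S_pos.le) (sub_le_sub_left ?_ _) h_nonneg (mul_pos prod_S_pos prod_T_pos).le
    have := two_pow_sub_one_nonneg S.card
    have := two_pow_sub_one_nonneg (t + 1)
    gcongr
    exact one_le_two
  · refine le_trans (mul_nonpos_of_nonneg_of_nonpos ?_ h_neg.le) (Nat.cast_nonneg _)
    exact mul_nonneg prod_S_pos.le
      (mul_nonneg (by simpa using one_sub_inv_nonneg 1) (pow_nonneg (one_sub_inv_nonneg 2) t))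

theorem existsNormalNonPower_of_primeFactors_eq_insert [Finite E] {q m D l t s : ℕ} {S : Finset ℕ}
    (hq : Fintype.card F = q) (hm : Module.finrank F E = m) (hcop : m.Coprime (q - 1))
    (hS : (repunit q m).primeFactors = insert l S) (ht : unityFactorBound q m D ≤ t + 1)
    (hs : q ^ m ≤ s ^ 2)
    (h : ((q : ℝ) ^ m - 1) / l < (∏ p ∈ S, (1 - (p : ℝ)⁻¹)) *
      ((1 - (q : ℝ)⁻¹) * (1 - ((q : ℝ) ^ 2)⁻¹) ^ t) *
        (q ^ m - (2 ^ S.card - 1) * (2 ^ (t + 1) - 1) * s)) :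
    ExistsNormalNonPower F E := by
  subst hq hm
  cases nonempty_fintype E
  have hl : l ∈ (repunit (Fintype.card F) (Module.finrank F E)).primeFactors :=
    hS ▸ Finset.mem_insert_self l S
  simp only [← Nat.cast_pow] at h
  simp only [← Module.card_eq_pow_finrank (K := F) (V := E)] at hs h
  push_cast at h
  have sieve := h.trans_le (mul_sub_le_ncard_sieveSet_unityFactors hcop
    (hS ▸ Finset.subset_insert l S)
    ((card_unityFactors_le_bound F Module.finrank_pos.ne' D).trans ht) hs)
  have removed := ncard_sieveSet_le_ncard_sieveSet_insert_add
    (S := S) (T := unityFactors F (Module.finrank F E))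
    (Nat.prime_of_mem_primeFactors hl).ne_zero
    (dvd_card_sub_one_of_dvd_repunit (Nat.dvd_of_mem_primeFactors hl))
  have powers_le : (((Fintype.card E - 1) / l : ℕ) : ℝ) ≤ ((Fintype.card E : ℝ) - 1) / l := by
    rw [← Nat.cast_pred Fintype.card_pos]
    exact Nat.cast_div_le
  rw [← Nat.cast_le (α := ℝ), Nat.cast_add] at removed
  rw [ExistsNormalNonPower, hS, ← Set.ncard_pos (Set.toFinite _), ← Nat.cast_pos (α := ℝ)]
  linarith

theorem existsNormalNonPower_of_mem_exceptionalPairs [Finite E]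
    (h : (Fintype.card F, Module.finrank F E) ∈ exceptionalPairs) : ExistsNormalNonPower F E := by
  simp only [exceptionalPairs, Finset.mem_insert, Finset.mem_singleton, Prod.mk.injEq] at h
  obtain ⟨hq, hm⟩ | ⟨hq, hm⟩ | ⟨hq, hm⟩ := h
  · exact existsNormalNonPower_of_primeFactors_eq_insert hq hm
      (D := 4) (l := 7) (S := ∅) (t := 1) (s := 3)
      (by decide) (by decide +kernel) (by decide +kernel) (by norm_num) (by norm_num)
  · exact existsNormalNonPower_of_primeFactors_eq_insert hq hm
      (D := 4) (l := 7) (S := {3}) (t := 1) (s := 8)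
      (by decide) (by decide +kernel) (by decide +kernel) (by norm_num) (by norm_num)
  · exact existsNormalNonPower_of_primeFactors_eq_insert hq hm
      (D := 4) (l := 151) (S := {7, 31}) (t := 4) (s := 182)
      (by decide) (by decide +kernel) (by decide +kernel) (by norm_num) (by norm_num)

end LeaveOneOut

section Main

variable {F E : Type*} [Field F] [Fintype F] [Field E] [Algebra F E]

theorem existsNormalNonPower [Finite E] (hcop : (Module.finrank F E).Coprime (Fintype.card F - 1)) :
    ExistsNormalNonPower F E := by
  by_cases h : (Fintype.card F, Module.finrank F E) ∈ exceptionalPairs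
  · exact existsNormalNonPower_of_mem_exceptionalPairs h
  · exact existsNormalNonPower_of_notMem_exceptionalPairs hcop h

theorem exists_isNormalElement_orderOf_eq_repunit [Finite E]
    (hcop : (Module.finrank F E).Coprime (Fintype.card F - 1)) :
    ∃ x : E, IsNormalElement F x ∧
      orderOf x = repunit (Fintype.card F) (Module.finrank F E) := by
  have hq : 2 ≤ Fintype.card F := Fintype.one_lt_card
  have hm : Module.finrank F E ≠ 0 := Module.finrank_pos.ne'
  obtain ⟨u, hu_pow, hu_range⟩ := existsNormalNonPower hcop
  have normal : IsNormalElement F (u : E) := isNormalElement_of_forall_irreducible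
    fun P hP hP_monic hP_dvd => hu_range P ((mem_unityFactors hm).mpr ⟨hP, hP_monic, hP_dvd⟩)
  obtain ⟨c, hc⟩ := exists_smul_orderOf_eq_repunit (coprime_repunit hq hcop) (x := u)
    fun l hl hl_dvd y hy => hu_pow l (Nat.mem_primeFactors.mpr
      ⟨hl, hl_dvd, repunit_ne_zero hq hm⟩) y (by rw [← hy, Units.val_pow_eq_pow_val])
  exact ⟨c • (u : E), normal.smul c.ne_zero, hc⟩

end Main

/-- Let `E/F` be a degree-`m` extension of finite fields with `card F = q`.
If `gcd(m, q − 1) = 1`, then `E` contains an element `α` that is normal over `F`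
(its conjugates `α, α^q, …, α^{q^{m−1}}` form an `F`-basis of `E`) and whose
multiplicative order equals `(q^m − 1)/(q − 1)`. -/
theorem exists_normal_of_order_qm_sub_one_div_q_sub_one
    {F E : Type} [Field F] [Fintype F] [Field E] [Fintype E] [Algebra F E]
    (q m : ℕ) (hF : Fintype.card F = q) (hm : Module.finrank F E = m)
    (hcop : Nat.gcd m (q - 1) = 1) :
    ∃ α : E,
      LinearIndependent F (fun i : Fin m => α ^ q ^ (i : ℕ)) ∧
      Submodule.span F (Set.range fun i : Fin m => α ^ q ^ (i : ℕ)) = ⊤ ∧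
      orderOf α = (q ^ m - 1) / (q - 1) := by
  subst hF hm
  obtain ⟨α, normal, orderOf_eq⟩ := exists_isNormalElement_orderOf_eq_repunit hcop
  exact ⟨α, normal.linearIndependent, normal.span,
    orderOf_eq.trans (repunit_eq_div Fintype.one_lt_card)⟩
end
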